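/- arXiv:2201.01345 — 2 statements merged into one kernel-verified Lean document; each statement's English description precedes it below -/
import Mathlib

section
/- (Theorem C, Second Quaternionic Nullstellensatz) For any p₁, …, p_m, q ∈ ℍ[x₁, …, x_d] the following are equivalent: (1) for every a ∈ ℍ^d such that p₁(a) = ⋯ = p_m(a) = 0 one has q(a) = 0; (2) q belongs to every real left ideal of ℍ[x₁, …, x_d] that contains p₁, …, p_m. -/
local notation "ℍ" => Quaternion ℝ

/-- Auxiliary quaternion units. -/
def qI : ℍ := ⟨0,1,0,0⟩
def qJ : ℍ := ⟨0,0,1,0⟩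
def qK : ℍ := ⟨0,0,0,1⟩

lemma quat_star_add_star (q : ℍ) :
    star q + star q = -(q + qI * q * qI + qJ * q * qJ + qK * q * qK) := by
  ext <;>
    simp [Quaternion.re_mul, Quaternion.imI_mul, Quaternion.imJ_mul,
      Quaternion.imK_mul] <;>
    simp [qI, qJ, qK]

lemma quat_star_eq (q : ℍ) :
    star q = -(2⁻¹ : ℍ) * (q + qI * q * qI + qJ * q * qJ + qK * q * qK) := by
  have h : q + qI * q * qI + qJ * q * qJ + qK * q * qK = -(star q + star q) :=
    neg_eq_iff_eq_neg.mp (quat_star_add_star q).symm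
  rw [h, neg_mul, mul_neg, neg_neg, ← two_mul, ← mul_assoc,
    inv_mul_cancel₀ (by
      intro h2
      have h3 : (2 : Quaternion ℝ).re = (0 : Quaternion ℝ).re := congrArg QuaternionAlgebra.re h2
      have h4 : (2 : ℝ) = 0 := h3
      norm_num at h4 : (2:ℍ) ≠ 0), one_mul]

/-- The ring `ℍ[x₁,…,x_d]` of all polynomial functions from `ℍ^d` to `ℍ`: the subring of
the ring of all functions `ℍ^d → ℍ` generated by the constant functions and the coordinate
functions. -/
def HPoly (d : ℕ) : Subring ((Fin d → ℍ) → ℍ) :=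
  Subring.closure
    ((Set.range fun c : ℍ => Function.const (Fin d → ℍ) c) ∪
      (Set.range fun i : Fin d => fun a : Fin d → ℍ => a i))

lemma star_mem_HPoly {d : ℕ} {f : (Fin d → ℍ) → ℍ} (hf : f ∈ HPoly d) :
    star f ∈ HPoly d := by
  induction hf using Subring.closure_induction with
  | mem g hg =>
      rcases hg with ⟨c, rfl⟩ | ⟨i, rfl⟩
      · have : star (Function.const (Fin d → ℍ) c) = Function.const (Fin d → ℍ) (star c) :=
          funext fun a => rfl
        rw [this]
        exact Subring.subset_closure (Or.inl ⟨star c, rfl⟩)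
      · have hX : (fun a : Fin d → ℍ => a i) ∈ HPoly d :=
          Subring.subset_closure (Or.inr ⟨i, rfl⟩)
        have hC : ∀ c : ℍ, Function.const (Fin d → ℍ) c ∈ HPoly d := fun c =>
          Subring.subset_closure (Or.inl ⟨c, rfl⟩)
        have hstar : star (fun a : Fin d → ℍ => a i) =
            Function.const (Fin d → ℍ) (-(2⁻¹ : ℍ)) *
              ((fun a : Fin d → ℍ => a i) +
                Function.const (Fin d → ℍ) qI * (fun a : Fin d → ℍ => a i) *
                  Function.const (Fin d → ℍ) qI +
                Function.const (Fin d → ℍ) qJ * (fun a : Fin d → ℍ => a i) *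
                  Function.const (Fin d → ℍ) qJ +
                Function.const (Fin d → ℍ) qK * (fun a : Fin d → ℍ => a i) *
                  Function.const (Fin d → ℍ) qK) :=
          funext fun a => quat_star_eq (a i)
        rw [hstar]
        exact mul_mem (hC _)
          (add_mem (add_mem (add_mem hX (mul_mem (mul_mem (hC _) hX) (hC _)))
            (mul_mem (mul_mem (hC _) hX) (hC _))) (mul_mem (mul_mem (hC _) hX) (hC _)))
  | one => rw [star_one]; exact one_mem _
  | mul x y hx hy ihx ihy => rw [star_mul]; exact mul_mem ihy ihx
  | add x y hx hy ihx ihy => rw [star_add]; exact add_mem ihx ihy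
  | neg x hx ihx => rw [star_neg]; exact neg_mem ihx
  | zero => rw [star_zero]; exact zero_mem _

noncomputable instance HPoly.instStarRing (d : ℕ) : StarRing (HPoly d) where
  star x := ⟨star x.1, star_mem_HPoly x.2⟩
  star_involutive x := Subtype.ext (star_star x.1)
  star_mul x y := Subtype.ext (star_mul x.1 y.1)
  star_add x y := Subtype.ext (star_add x.1 y.1)

/-- A left ideal `I` of a ring `A` with involution `star` is *real* if whenever
`star (a 0) * a 0 + ⋯ + star (a (k-1)) * a (k-1) ∈ I`, each `a i` lies in `I`.
(In Mathlib, `Ideal A` means a left ideal of `A`.) -/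
def Ideal.IsRealLeftIdeal {A : Type*} [Ring A] [StarRing A] (I : Ideal A) : Prop :=
  ∀ (k : ℕ) (a : Fin k → A), (∑ i, star (a i) * a i) ∈ I → ∀ i, a i ∈ I

open Polynomial

/-- The intermediate value property for polynomials over an ordered field. -/
def IVP (K : Type*) [Field K] [LinearOrder K] : Prop :=
  ∀ (p : K[X]) (a b : K), a < b → p.eval a * p.eval b < 0 → ∃ c, a < c ∧ c < b ∧ p.eval c = 0

section ivp
variable {K : Type*} [Field K] [LinearOrder K] [IsStrictOrderedRing K]

lemma rolle_aux (hK : IVP K) (p : K[X]) (hp : p ≠ 0) (a b : K) (hab : a < b)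
    (ha : p.eval a = 0) (hb : p.eval b = 0) (hno : ∀ c, a < c → c < b → p.eval c ≠ 0) :
    ∃ c, a < c ∧ c < b ∧ p.derivative.eval c = 0 := by
  obtain ⟨r, hr, hra⟩ := exists_eq_pow_rootMultiplicity_mul_and_not_dvd p hp a
  have hm : 0 < p.rootMultiplicity a := (rootMultiplicity_pos hp).2 ha
  obtain ⟨m, hm⟩ : ∃ m, p.rootMultiplicity a = m + 1 := ⟨_, (Nat.succ_pred_eq_of_pos hm).symm⟩
  rw [hm] at hr
  have hr0 : r ≠ 0 := by rintro rfl; simp at hra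
  have hrb : r.eval b = 0 := by
    rw [hr] at hb
    simp only [eval_mul, eval_pow, eval_sub, eval_X, eval_C, mul_eq_zero] at hb
    rcases hb with hb | hb
    · have := eq_zero_of_pow_eq_zero hb
      linarith
    · exact hb
  obtain ⟨q, hq, hqb⟩ := exists_eq_pow_rootMultiplicity_mul_and_not_dvd r hr0 b
  have hk : 0 < r.rootMultiplicity b := (rootMultiplicity_pos hr0).2 hrb
  obtain ⟨k, hk⟩ : ∃ m, r.rootMultiplicity b = m + 1 := ⟨_, (Nat.succ_pred_eq_of_pos hk).symm⟩
  rw [hk] at hq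
  rw [dvd_iff_isRoot] at hra hqb
  have hqa : q.eval a ≠ 0 := by
    intro h; apply hra; rw [IsRoot, hq]; simp [h]
  have hqb' : q.eval b ≠ 0 := hqb
  have hpos : 0 < q.eval a * q.eval b := by
    by_contra hcon
    have : q.eval a * q.eval b < 0 :=
      lt_of_le_of_ne (not_lt.1 hcon) (mul_ne_zero hqa hqb')
    obtain ⟨c, h1, h2, h3⟩ := hK q a b hab this
    exact hno c h1 h2 (by rw [hr, hq]; simp [h3])
  obtain ⟨c, h1, h2, h3⟩ := hK (C ((m:K)+1) * (X - C b) * q + C ((k:K)+1) * (X - C a) * q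
      + (X - C a) * (X - C b) * derivative q) a b hab (by
    simp only [eval_add, eval_mul, eval_sub, eval_X, eval_C, sub_self, mul_zero, zero_mul,
      zero_add, add_zero]
    have h1 : (0:K) < ((m:K)+1)*((k:K)+1)*(b-a)^2 := by
      have := sub_pos.2 hab
      positivity
    nlinarith [mul_pos h1 hpos])
  refine ⟨c, h1, h2, ?_⟩
  have : derivative p = (X - C a)^m * (X - C b)^k * (C ((m:K)+1) * (X - C b) * q
      + C ((k:K)+1) * (X - C a) * q + (X - C a) * (X - C b) * derivative q) := by
    rw [hr, hq]
    simp only [derivative_mul, derivative_X_sub_C_pow, map_add, map_one, map_natCast,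
      Nat.cast_add, Nat.cast_one, Nat.add_sub_cancel]
    ring
  rw [this, eval_mul, h3, mul_zero]

lemma rolle (hK : IVP K) (p : K[X]) (a b : K) (hab : a < b)
    (ha : p.eval a = 0) (hb : p.eval b = 0) :
    ∃ c, a < c ∧ c < b ∧ p.derivative.eval c = 0 := by
  classical
  by_cases hp : p = 0
  · obtain ⟨c, h1, h2⟩ := exists_between hab
    exact ⟨c, h1, h2, by simp [hp]⟩
  let s := p.roots.toFinset.filter (fun x => a < x)
  have hbs : b ∈ s := by simp [s, hp, hb, hab]
  obtain ⟨b', hb', hmin⟩ := s.exists_min_image id ⟨b, hbs⟩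
  simp only [s, Finset.mem_filter, Multiset.mem_toFinset, mem_roots hp, IsRoot, id] at hb' hmin
  obtain ⟨c, h1, h2, h3⟩ := rolle_aux hK p hp a b' hb'.2 ha hb'.1 (by
    intro c h1 h2 h3
    exact absurd (hmin c ⟨h3, h1⟩) (not_le.2 h2))
  exact ⟨c, h1, h2.trans_le (hmin b ⟨hb, hab⟩), h3⟩

lemma sign_eq_iff_mul_pos {x y : K} (h : 0 < x * y) : SignType.sign x = SignType.sign y := by
  rcases pos_and_pos_or_neg_and_neg_of_mul_pos h with ⟨h1, h2⟩ | ⟨h1, h2⟩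
  · rw [sign_pos h1, sign_pos h2]
  · rw [sign_neg h1, sign_neg h2]

lemma ivp_const_sign (hK : IVP K) (p : K[X]) (h : ∀ c, p.eval c ≠ 0) (a b : K) :
    SignType.sign (p.eval a) = SignType.sign (p.eval b) := by
  have key : ∀ a b, a < b → SignType.sign (p.eval a) = SignType.sign (p.eval b) := by
    intro a b hab
    apply sign_eq_iff_mul_pos
    by_contra hcon
    obtain ⟨c, -, -, h3⟩ := hK p a b hab
      (lt_of_le_of_ne (not_lt.1 hcon) (mul_ne_zero (h a) (h b)))
    exact h c h3
  rcases lt_trichotomy a b with h1 | rfl | h1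
  · exact key _ _ h1
  · rfl
  · exact (key _ _ h1).symm

/-- A simple root, unique in `[a,b]`, separates the signs: for `a ≤ c ≤ b` nonroot,
`c < z ↔ p(c)` has the sign of `p(a)`. -/
lemma simple_root_sign (hK : IVP K) (p : K[X]) (a b z : K) (haz : a < z) (hzb : z < b)
    (hz : p.eval z = 0) (ha : p.eval a ≠ 0) (hb : p.eval b ≠ 0)
    (hd : ∀ c, a < c → c < b → p.derivative.eval c ≠ 0) : p.eval a * p.eval b < 0 := by
  have huniq : ∀ c, a < c → c < b → p.eval c = 0 → c = z := by
    intro c h1 h2 h3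
    rcases lt_trichotomy c z with h | h | h
    · obtain ⟨e, h4, h5, h6⟩ := rolle hK p c z h h3 hz
      exact absurd h6 (hd e (h1.trans h4) (h5.trans hzb))
    · exact h
    · obtain ⟨e, h4, h5, h6⟩ := rolle hK p z c h hz h3
      exact absurd h6 (hd e (haz.trans h4) (h5.trans h2))
  by_contra hcon
  have hpos : 0 < p.eval a * p.eval b := lt_of_le_of_ne (not_lt.1 hcon) (mul_ne_zero ha hb).symm
  obtain ⟨g, hg⟩ := dvd_iff_isRoot.2 hz
  have hga : p.eval a = (a - z) * g.eval a := by rw [hg]; simp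
  have hgb : p.eval b = (b - z) * g.eval b := by rw [hg]; simp
  have : g.eval a * g.eval b < 0 := by
    rw [hga, hgb] at hpos
    have h1 : 0 < (z - a) * (b - z) := mul_pos (sub_pos.2 haz) (sub_pos.2 hzb)
    by_contra h2
    have := mul_nonneg h1.le (not_lt.1 h2)
    nlinarith
  obtain ⟨c, h1, h2, h3⟩ := hK g a b (haz.trans hzb) this
  have hc := huniq c h1 h2 (by rw [hg]; simp [h3])
  subst hc
  exact hd c h1 h2 (by rw [hg]; simp [h3])

/-- position of a nonroot relative to the unique root -/
lemma lt_root_iff (hK : IVP K) (p : K[X]) (a b z c : K) (haz : a < z) (hzb : z < b)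
    (hz : p.eval z = 0) (hab : p.eval a * p.eval b < 0)
    (hd : ∀ c, a < c → c < b → p.derivative.eval c ≠ 0) (hac : a < c) (hcb : c < b)
    (hc : p.eval c ≠ 0) : c < z ↔ SignType.sign (p.eval c) = SignType.sign (p.eval a) := by
  have ha : p.eval a ≠ 0 := by intro h; simp [h] at hab
  have hb : p.eval b ≠ 0 := by intro h; simp [h] at hab
  have huniq : ∀ c, a < c → c < b → p.eval c = 0 → c = z := by
    intro c h1 h2 h3
    rcases lt_trichotomy c z with h | h | h
    · obtain ⟨e, h4, h5, h6⟩ := rolle hK p c z h h3 hz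
      exact absurd h6 (hd e (h1.trans h4) (h5.trans hzb))
    · exact h
    · obtain ⟨e, h4, h5, h6⟩ := rolle hK p z c h hz h3
      exact absurd h6 (hd e (haz.trans h4) (h5.trans h2))
  constructor
  · intro h
    apply sign_eq_iff_mul_pos
    by_contra hcon
    obtain ⟨e, h1, h2, h3⟩ := hK p a c hac
      (by rw [mul_comm]; exact lt_of_le_of_ne (not_lt.1 hcon) (mul_ne_zero hc ha))
    have := huniq e h1 (h2.trans hcb) h3
    exact absurd (this ▸ h2) (not_lt.2 h.le)
  · intro h
    by_contra hcz
    have hcz' : z < c := lt_of_le_of_ne (not_lt.1 hcz) (by rintro rfl; exact hc hz)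
    have hneg : p.eval c * p.eval b < 0 := by
      rw [← sign_eq_neg_one_iff, sign_mul, h, ← sign_mul, sign_eq_neg_one_iff]; exact hab
    obtain ⟨e, h1, h2, h3⟩ := hK p c b hcb hneg
    have := huniq e (hac.trans h1) h2 h3
    exact absurd (this ▸ h1) (not_lt.2 hcz'.le)
end ivp


section core
variable {L R S : Type*} [CommRing L] [IsDomain L]
  [Field R] [LinearOrder R] [IsStrictOrderedRing R]
  [Field S] [LinearOrder S] [IsStrictOrderedRing S]

lemma sign_inj_left (i : L →+* R) (j : L →+* S)
    (hs : ∀ x, SignType.sign (i x) = SignType.sign (j x)) (x : L) : i x = 0 ↔ j x = 0 := by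
  rw [← sign_eq_zero_iff, hs, sign_eq_zero_iff]

lemma sign_lt_iff (i : L →+* R) (j : L →+* S)
    (hs : ∀ x, SignType.sign (i x) = SignType.sign (j x)) (x y : L) : i x < i y ↔ j x < j y := by
  have := hs (y - x)
  rw [← sub_pos, ← sub_pos (a := j y), ← sign_eq_one_iff, ← sign_eq_one_iff, ← map_sub, ← map_sub,
    this]

lemma cut_sign (hR : IVP R) (hS : IVP S) (i : L →+* R) (j : L →+* S)
    (hi : Function.Injective i) (hj : Function.Injective j)
    (hs : ∀ x, SignType.sign (i x) = SignType.sign (j x)) (D : ℕ)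
    (hRD : ∀ g : L[X], g ≠ 0 → g.natDegree < D → ∀ z, eval₂ i z g = 0 → ∃ c, i c = z)
    (hSD : ∀ g : L[X], g ≠ 0 → g.natDegree < D → ∀ z, eval₂ j z g = 0 → ∃ c, j c = z)
    (z : R) (w : S) (hcut : ∀ c, i c < z ↔ j c < w) (hz : ∀ c, i c ≠ z) (hw : ∀ c, j c ≠ w) :
    ∀ (n : ℕ) (g : L[X]), g.natDegree ≤ n → n < D →
      SignType.sign (eval₂ i z g) = SignType.sign (eval₂ j w g) := by
  have hlin : ∀ c, SignType.sign (z - i c) = SignType.sign (w - j c) := by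
    intro c
    rcases lt_or_gt_of_ne (hz c) with h | h
    · rw [sign_pos (sub_pos.2 h), sign_pos (sub_pos.2 ((hcut c).1 h))]
    · have : w < j c := lt_of_le_of_ne (not_lt.1 (fun h' => absurd ((hcut c).2 h') (not_lt.2 h.le)))
        (hw c).symm
      rw [sign_neg (sub_neg.2 h), sign_neg (sub_neg.2 this)]
  intro n
  induction n with
  | zero =>
    intro g hg hD
    rw [eq_C_of_natDegree_le_zero hg]
    simp [hs]
  | succ n ih =>
    intro g hg hD
    by_cases hroot : ∃ c, g.eval c = 0
    · obtain ⟨c, hc⟩ := hroot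
      obtain ⟨r, hr⟩ := dvd_iff_isRoot.2 hc
      by_cases hr0 : r = 0
      · simp [hr, hr0]
      have hdeg : r.natDegree ≤ n := by
        rw [hr, natDegree_mul (X_sub_C_ne_zero c) hr0, natDegree_X_sub_C] at hg
        omega
      rw [hr, eval₂_mul, eval₂_mul, sign_mul, sign_mul, ih r hdeg (by omega)]
      simp [hlin]
    · push Not at hroot
      have hg0 : g ≠ 0 := by rintro rfl; exact hroot 0 (by simp)
      have h1 : ∀ c, (g.map i).eval c ≠ 0 := by
        intro c hc
        rw [← eval₂_eq_eval_map] at hc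
        obtain ⟨e, rfl⟩ := hRD g hg0 (by omega) c hc
        rw [eval₂_hom] at hc
        exact hroot e (hi (by simpa using hc))
      have h2 : ∀ c, (g.map j).eval c ≠ 0 := by
        intro c hc
        rw [← eval₂_eq_eval_map] at hc
        obtain ⟨e, rfl⟩ := hSD g hg0 (by omega) c hc
        rw [eval₂_hom] at hc
        exact hroot e (hj (by simpa using hc))
      rw [eval₂_eq_eval_map, eval₂_eq_eval_map, ivp_const_sign hR _ h1 z (i 0),
        ivp_const_sign hS _ h2 w (j 0), ← eval₂_eq_eval_map, ← eval₂_eq_eval_map,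
        eval₂_hom, eval₂_hom, hs]

lemma root_bound (i : L →+* R) (f : L[X]) (hf : f.Monic) (z : R) (hz : eval₂ i z f = 0) :
    ∃ B : L, z < i B := by
  by_contra hcon
  push Not at hcon
  obtain ⟨D, hD⟩ : ∃ D, f.natDegree = D + 1 := by
    rcases h : f.natDegree with _ | D
    · rw [hf.natDegree_eq_zero.1 h] at hz
      simp at hz
    · exact ⟨D, rfl⟩
  have hz1 : 1 ≤ z := by simpa using hcon 1
  have hB := hcon (1 + ∑ k ∈ Finset.range (D+1), (f.coeff k ^ 2 + 1))
  rw [eval₂_eq_sum_range, hD, Finset.sum_range_succ, ← hD, hf.coeff_natDegree, hD] at hz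
  have hle : ∀ k ∈ Finset.range (D+1), - ((i (f.coeff k) ^ 2 + 1) * z ^ D) ≤ i (f.coeff k) * z ^ k := by
    intro k hk
    have hk : k ≤ D := by simpa [Nat.lt_succ_iff] using hk
    have h1 : z ^ k ≤ z ^ D := pow_le_pow_right₀ hz1 hk
    have h2 : 0 < z ^ k := by positivity
    set c := i (f.coeff k)
    have h3 : -(c^2+1) ≤ c := by nlinarith [sq_nonneg (c + 1)]
    calc - ((c ^ 2 + 1) * z ^ D) ≤ -((c^2+1) * z^k) := by
          apply neg_le_neg; gcongr
      _ = -(c^2+1) * z^k := by ring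
      _ ≤ _ := by gcongr
  have hsum := Finset.sum_le_sum hle
  rw [Finset.sum_neg_distrib, ← Finset.sum_mul] at hsum
  simp only [map_one, map_mul, one_mul, map_add, map_sum, map_pow] at hB hz
  have hzD : 0 < z ^ D := by positivity
  rw [pow_succ] at hz
  nlinarith

lemma core_extend (hinv : ∀ u : L, u ≠ 0 → ∃ v, u * v = 1)
    (hR : IVP R) (hS : IVP S) (i : L →+* R) (j : L →+* S)
    (hi : Function.Injective i) (hj : Function.Injective j)
    (hs : ∀ x, SignType.sign (i x) = SignType.sign (j x)) (D : ℕ)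
    (hRD : ∀ g : L[X], g ≠ 0 → g.natDegree < D → ∀ z, eval₂ i z g = 0 → ∃ c, i c = z)
    (hSD : ∀ g : L[X], g ≠ 0 → g.natDegree < D → ∀ z, eval₂ j z g = 0 → ∃ c, j c = z)
    (f₀ : L[X]) (hf₀ : f₀ ≠ 0) (hf₀D : f₀.natDegree = D) (z : R) (hz₀ : eval₂ i z f₀ = 0)
    (hzr : ∀ c, i c ≠ z) :
    ∃ w : S, ∀ g : L[X], SignType.sign (eval₂ i z g) = SignType.sign (eval₂ j w g) := by
  classical
  -- make monic
  obtain ⟨f, hf, hfD, hz⟩ : ∃ f : L[X], f.Monic ∧ f.natDegree = D ∧ eval₂ i z f = 0 := by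
    obtain ⟨v, hv⟩ := hinv f₀.leadingCoeff (leadingCoeff_ne_zero.2 hf₀)
    have hv0 : v ≠ 0 := by rintro rfl; simp at hv
    refine ⟨C v * f₀, ?_, ?_, ?_⟩
    · rw [Monic, leadingCoeff_mul, leadingCoeff_C, mul_comm, hv]
    · rw [natDegree_C_mul hv0, hf₀D]
    · rw [eval₂_mul, hz₀, mul_zero]
  have hD : D ≠ 0 := by
    rintro rfl
    rw [hf.natDegree_eq_zero.1 hfD] at hz
    simp at hz
  have hfL : ∀ c, f.eval c ≠ 0 := by
    intro c hc
    obtain ⟨r, hr⟩ := dvd_iff_isRoot.2 hc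
    have hr0 : r ≠ 0 := by rintro rfl; simp [hr] at hf
    have hdeg : r.natDegree < D := by
      rw [← hfD, hr, natDegree_mul (X_sub_C_ne_zero c) hr0, natDegree_X_sub_C]
      omega
    rw [hr, eval₂_mul] at hz
    rcases mul_eq_zero.1 hz with h | h
    · simp only [eval₂_sub, eval₂_X, eval₂_C] at h
      exact hzr c (sub_eq_zero.1 h).symm
    · obtain ⟨c', h'⟩ := hRD r hr0 hdeg z h
      exact hzr c' h'
  set f' := derivative f with hf'
  have hf'D : f'.natDegree < D := hfD ▸ natDegree_derivative_lt (by rw [hfD]; exact hD)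
  have hf'0 : f' ≠ 0 := by
    intro h
    have h1 : derivative (f.map i) = 0 := by rw [derivative_map, ← hf', h, Polynomial.map_zero]
    have h2 := natDegree_eq_zero_of_derivative_eq_zero h1
    rw [natDegree_map_eq_of_injective hi] at h2
    omega
  have hf'root : ∀ x : R, eval₂ i x f' = 0 → ∃ c, i c = x := hRD f' hf'0 hf'D
  have hmap0 : f'.map i ≠ 0 := (Polynomial.map_ne_zero_iff hi).2 hf'0
  -- lower endpoint
  obtain ⟨a, haz, ha⟩ : ∃ a, i a < z ∧ ∀ c, i a < c → c < z → eval₂ i c f' ≠ 0 := by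
    let s := (f'.map i).roots.toFinset.filter (fun x => x < z)
    have hmem : ∀ x, x ∈ s ↔ eval₂ i x f' = 0 ∧ x < z := by
      intro x; simp [s, hmap0, eval₂_eq_eval_map]
    rcases s.eq_empty_or_nonempty with h | h
    · obtain ⟨B, hB⟩ := root_bound i ((-1)^D * f.comp (-X)) (by
        rw [← hfD]; exact hf.neg_one_pow_natDegree_mul_comp_neg_X) (-z) (by
        simp [eval₂_mul, eval₂_comp, hz])
      refine ⟨-B, by rw [map_neg]; linarith, fun c _ h2 h3 => ?_⟩
      have : c ∈ s := (hmem c).2 ⟨h3, h2⟩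
      simp [h] at this
    · obtain ⟨m, hm, hmax⟩ := s.exists_max_image id h
      obtain ⟨h1, h2⟩ := (hmem m).1 hm
      obtain ⟨a, rfl⟩ := hf'root m h1
      exact ⟨a, h2, fun c h3 h4 h5 => absurd (hmax c ((hmem c).2 ⟨h5, h4⟩)) (not_le.2 h3)⟩
  obtain ⟨b, hzb, hb⟩ : ∃ b, z < i b ∧ ∀ c, z < c → c < i b → eval₂ i c f' ≠ 0 := by
    let s := (f'.map i).roots.toFinset.filter (fun x => z < x)
    have hmem : ∀ x, x ∈ s ↔ eval₂ i x f' = 0 ∧ z < x := by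
      intro x; simp [s, hmap0, eval₂_eq_eval_map]
    rcases s.eq_empty_or_nonempty with h | h
    · obtain ⟨B, hB⟩ := root_bound i f hf z hz
      refine ⟨B, hB, fun c h2 _ h3 => ?_⟩
      have : c ∈ s := (hmem c).2 ⟨h3, h2⟩
      simp [h] at this
    · obtain ⟨m, hm, hmax⟩ := s.exists_min_image id h
      obtain ⟨h1, h2⟩ := (hmem m).1 hm
      obtain ⟨a, rfl⟩ := hf'root m h1
      exact ⟨a, h2, fun c h3 h4 h5 => absurd (hmax c ((hmem c).2 ⟨h5, h3⟩)) (not_le.2 h4)⟩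
  have hd1 : ∀ c, i a < c → c < i b → (f.map i).derivative.eval c ≠ 0 := by
    intro c h1 h2
    rw [derivative_map, ← eval₂_eq_eval_map]
    rcases lt_trichotomy c z with h | h | h
    · exact ha c h1 h
    · subst h
      intro h3
      obtain ⟨e, he⟩ := hf'root c h3
      exact hzr e he
    · exact hb c h h2
  have hd2 : ∀ c, j a < c → c < j b → (f.map j).derivative.eval c ≠ 0 := by
    intro c h1 h2 h3
    rw [derivative_map, ← eval₂_eq_eval_map] at h3
    obtain ⟨e, rfl⟩ := hSD f' hf'0 hf'D c h3
    refine hd1 (i e) ((sign_lt_iff i j hs _ _).2 h1) ((sign_lt_iff i j hs _ _).2 h2) ?_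
    rw [derivative_map, ← eval₂_eq_eval_map, eval₂_hom]
    rw [eval₂_hom] at h3
    exact (sign_inj_left i j hs _).2 h3
  have ev1 : ∀ c, (f.map i).eval (i c) = i (f.eval c) := by
    intro c; rw [← eval₂_eq_eval_map, eval₂_hom]
  have ev2 : ∀ c, (f.map j).eval (j c) = j (f.eval c) := by
    intro c; rw [← eval₂_eq_eval_map, eval₂_hom]
  have hn1 : ∀ c, (f.map i).eval (i c) ≠ 0 := by
    intro c; rw [ev1]; exact (map_ne_zero_iff i hi).2 (hfL c)
  have hn2 : ∀ c, (f.map j).eval (j c) ≠ 0 := by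
    intro c; rw [ev2]; exact (map_ne_zero_iff j hj).2 (hfL c)
  have hz' : (f.map i).eval z = 0 := by rw [← eval₂_eq_eval_map]; exact hz
  have hneg1 := simple_root_sign hR (f.map i) (i a) (i b) z haz hzb hz' (hn1 a) (hn1 b) hd1
  have hneg2 : (f.map j).eval (j a) * (f.map j).eval (j b) < 0 := by
    rw [ev1, ev1, ← map_mul, ← sign_eq_neg_one_iff, hs, sign_eq_neg_one_iff, map_mul] at hneg1
    rw [ev2, ev2]; exact hneg1
  obtain ⟨w, haw, hwb, hw⟩ := hS (f.map j) (j a) (j b)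
    ((sign_lt_iff i j hs _ _).1 (haz.trans hzb)) hneg2
  have hwr : ∀ c, j c ≠ w := by rintro c rfl; exact hn2 c hw
  have hcut : ∀ c, i c < z ↔ j c < w := by
    intro c
    by_cases hca : i a < i c
    · by_cases hcb : i c < i b
      · rw [lt_root_iff hR (f.map i) (i a) (i b) z (i c) haz hzb hz' hneg1 hd1 hca hcb (hn1 c),
          lt_root_iff hS (f.map j) (j a) (j b) w (j c) haw hwb hw hneg2 hd2
            ((sign_lt_iff i j hs _ _).1 hca) ((sign_lt_iff i j hs _ _).1 hcb) (hn2 c),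
          ev1, ev1, ev2, ev2, hs, hs]
      · have hcb' : ¬ j c < j b := fun h => hcb ((sign_lt_iff i j hs _ _).2 h)
        constructor
        · intro h; exact absurd (h.trans hzb) hcb
        · intro h; exact absurd (h.trans hwb) hcb'
    · have hca' : ¬ j a < j c := fun h => hca ((sign_lt_iff i j hs _ _).2 h)
      exact ⟨fun _ => (not_lt.1 hca').trans_lt haw, fun _ => (not_lt.1 hca).trans_lt haz⟩
  refine ⟨w, fun g => ?_⟩
  have hw' : eval₂ j w f = 0 := by rw [eval₂_eq_eval_map]; exact hw
  have hlt : (g %ₘ f).natDegree < D := by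
    rw [← hfD]
    exact natDegree_modByMonic_lt g hf (by rintro rfl; simp at hfD; omega)
  rw [← modByMonic_add_div g f, eval₂_add, eval₂_add, eval₂_mul, eval₂_mul, hz, hw', zero_mul,
    zero_mul, add_zero, add_zero]
  exact cut_sign hR hS i j hi hj hs D hRD hSD z w hcut hzr hwr _ _ le_rfl hlt
end core


section zorn
variable {R S : Type*} 
  [Field R] [LinearOrder R] [IsStrictOrderedRing R]
  [Field S] [LinearOrder S] [IsStrictOrderedRing S]

def SignCompat (Γ : Subring (R × S)) : Prop :=
  ∀ g ∈ Γ, SignType.sign g.1 = SignType.sign g.2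

def prL (Γ : Subring (R × S)) : Γ →+* R := (RingHom.fst R S).comp Γ.subtype
def prR (Γ : Subring (R × S)) : Γ →+* S := (RingHom.snd R S).comp Γ.subtype

lemma SignCompat.sign {Γ : Subring (R × S)} (h : SignCompat Γ) (x : Γ) :
    SignType.sign (prL Γ x) = SignType.sign (prR Γ x) := h x.1 x.2

lemma SignCompat.injL {Γ : Subring (R × S)} (h : SignCompat Γ) : Function.Injective (prL Γ) := by
  rw [injective_iff_map_eq_zero]
  intro x hx
  have h2 : prR Γ x = 0 := by rw [← sign_eq_zero_iff, ← h.sign, hx, sign_zero]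
  exact Subtype.ext (Prod.ext hx h2)

lemma SignCompat.injR {Γ : Subring (R × S)} (h : SignCompat Γ) : Function.Injective (prR Γ) := by
  rw [injective_iff_map_eq_zero]
  intro x hx
  have h2 : prL Γ x = 0 := by rw [← sign_eq_zero_iff, h.sign, hx, sign_zero]
  exact Subtype.ext (Prod.ext h2 hx)

lemma mem_of_maximal {Γ : Subring (R × S)} (hΓ : Maximal SignCompat Γ) (z : R) (w : S)
    (h : ∀ g : Γ[X], SignType.sign (eval₂ (prL Γ) z g) = SignType.sign (eval₂ (prR Γ) w g)) :
    (z, w) ∈ Γ := by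
  let Γ' := (Polynomial.eval₂RingHom Γ.subtype (z, w)).range
  have hle : Γ ≤ Γ' := fun x hx => ⟨C ⟨x, hx⟩, by simp⟩
  have hc : SignCompat Γ' := by
    rintro _ ⟨g, rfl⟩
    have h1 := Polynomial.hom_eval₂ g Γ.subtype (RingHom.fst R S) (z, w)
    have h2 := Polynomial.hom_eval₂ g Γ.subtype (RingHom.snd R S) (z, w)
    simp only [RingHom.coe_fst, RingHom.coe_snd] at h1 h2
    rw [coe_eval₂RingHom, h1, h2]
    exact h g
  exact hΓ.le_of_ge hc hle ⟨X, by simp⟩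

lemma inv_of_maximal {Γ : Subring (R × S)} (hΓ : Maximal SignCompat Γ) (u : Γ) (hu : u ≠ 0) :
    ∃ v, u * v = 1 := by
  have h1 : prL Γ u ≠ 0 := (map_ne_zero_iff _ hΓ.prop.injL).2 hu
  have h2 : prR Γ u ≠ 0 := (map_ne_zero_iff _ hΓ.prop.injR).2 hu
  refine ⟨⟨((prL Γ u)⁻¹, (prR Γ u)⁻¹), mem_of_maximal hΓ _ _ fun g => ?_⟩, ?_⟩
  · let v : Γ := ∑ k ∈ Finset.range (g.natDegree + 1), g.coeff k * u ^ (2 * g.natDegree - k)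
    have e : ∀ {T : Type _} [Field T] (i : Γ →+* T), i u ≠ 0 →
        i v = eval₂ i (i u)⁻¹ g * (i u) ^ (2 * g.natDegree) := by
      intro T _ i hi
      rw [eval₂_eq_sum_range, Finset.sum_mul, map_sum]
      apply Finset.sum_congr rfl
      intro k hk
      have hk : k ≤ 2 * g.natDegree := by
        have := Finset.mem_range.1 hk; omega
      rw [map_mul, map_pow, mul_assoc, inv_pow, pow_sub₀ _ hi hk, mul_comm (_ ^ _)]
    have e' : ∀ {T : Type _} [Field T] (i : Γ →+* T), i u ≠ 0 →
        i v = eval₂ i (i u)⁻¹ g * (i u) ^ (2 * g.natDegree) := by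
      intro T _ i hi
      rw [eval₂_eq_sum_range, Finset.sum_mul, map_sum]
      apply Finset.sum_congr rfl
      intro k hk
      have hk : k ≤ 2 * g.natDegree := by
        have := Finset.mem_range.1 hk; omega
      rw [map_mul, map_pow, mul_assoc, inv_pow, pow_sub₀ _ hi hk, mul_comm (_ ^ _)]
    have hv := hΓ.prop.sign v
    rw [e (prL Γ) h1, e' (prR Γ) h2, sign_mul, sign_mul, pow_mul, pow_mul,
      sign_pos (pow_pos (sq_pos_of_ne_zero h1) _), sign_pos (pow_pos (sq_pos_of_ne_zero h2) _),
      mul_one, mul_one] at hv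
    exact hv
  · apply Subtype.ext
    exact Prod.ext (mul_inv_cancel₀ h1) (mul_inv_cancel₀ h2)

lemma exists_maximal (Γ₀ : Subring (R × S)) (h₀ : SignCompat Γ₀) :
    ∃ Γ, Γ₀ ≤ Γ ∧ Maximal SignCompat Γ := by
  refine zorn_le_nonempty₀ {Γ | SignCompat Γ} (fun c hc hchain y hy => ?_) Γ₀ h₀
  refine ⟨sSup c, ?_, fun z hz => le_sSup hz⟩
  intro g hg
  obtain ⟨s, hs, hgs⟩ := (Subring.mem_sSup_of_directedOn ⟨y, hy⟩ hchain.directedOn).1 hg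
  exact hc hs g hgs

lemma roots_of_maximal (hR : IVP R) (hS : IVP S) {Γ : Subring (R × S)}
    (hΓ : Maximal SignCompat Γ) (D : ℕ) :
    (∀ g : Γ[X], g ≠ 0 → g.natDegree < D → ∀ z, eval₂ (prL Γ) z g = 0 → ∃ c, prL Γ c = z) ∧
    (∀ g : Γ[X], g ≠ 0 → g.natDegree < D → ∀ z, eval₂ (prR Γ) z g = 0 → ∃ c, prR Γ c = z) := by
  have : IsDomain Γ := hΓ.prop.injL.isDomain
  induction D with
  | zero => exact ⟨fun g _ h => absurd h (by omega), fun g _ h => absurd h (by omega)⟩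
  | succ D ih =>
    constructor
    · intro g hg hD z hz
      by_contra hcon
      push Not at hcon
      by_cases hlt : g.natDegree < D
      · obtain ⟨c, hc⟩ := ih.1 g hg hlt z hz
        exact hcon c hc
      obtain ⟨w, hw⟩ := core_extend (inv_of_maximal hΓ) hR hS (prL Γ) (prR Γ) hΓ.prop.injL
        hΓ.prop.injR hΓ.prop.sign D ih.1 ih.2 g hg (by omega) z hz hcon
      exact hcon ⟨(z, w), mem_of_maximal hΓ z w hw⟩ rfl
    · intro g hg hD z hz
      by_contra hcon
      push Not at hcon
      by_cases hlt : g.natDegree < D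
      · obtain ⟨c, hc⟩ := ih.2 g hg hlt z hz
        exact hcon c hc
      obtain ⟨w, hw⟩ := core_extend (inv_of_maximal hΓ) hS hR (prR Γ) (prL Γ) hΓ.prop.injR
        hΓ.prop.injL (fun x => (hΓ.prop.sign x).symm) D ih.2 ih.1 g hg (by omega) z hz hcon
      exact hcon ⟨(w, z), mem_of_maximal hΓ w z (fun g => (hw g).symm)⟩ rfl

/-- Any sign-compatible correspondence extends to all elements algebraic over it. -/
theorem exists_closed (hR : IVP R) (hS : IVP S) (Γ₀ : Subring (R × S)) (h₀ : SignCompat Γ₀) :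
    ∃ Γ, Γ₀ ≤ Γ ∧ SignCompat Γ ∧
      ∀ g : Γ[X], g ≠ 0 → ∀ z, eval₂ (prL Γ) z g = 0 → ∃ w, (z, w) ∈ Γ := by
  obtain ⟨Γ, hle, hΓ⟩ := exists_maximal Γ₀ h₀
  refine ⟨Γ, hle, hΓ.prop, fun g hg z hz => ?_⟩
  obtain ⟨c, rfl⟩ := (roots_of_maximal hR hS hΓ (g.natDegree + 1)).1 g hg (by omega) z hz
  exact ⟨c.1.2, c.2⟩
end zorn


section transfer

lemma ivp_hom_sign {R R' : Type*} [Field R] [LinearOrder R] [IsStrictOrderedRing R]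
    [Field R'] [LinearOrder R'] [IsStrictOrderedRing R'] (hR : IVP R) (φ : R →+* R') (x : R) :
    SignType.sign (φ x) = SignType.sign x := by
  have key : ∀ x : R, 0 < x → 0 < φ x := by
    intro x hx
    obtain ⟨c, h1, h2, h3⟩ := hR (X ^ 2 - C x) 0 (x + 1) (by linarith) (by
      simp only [eval_sub, eval_pow, eval_X, eval_C]
      have h : 0 < (x + 1) ^ 2 - x := by nlinarith
      nlinarith [mul_pos hx h])
    simp only [eval_sub, eval_pow, eval_X, eval_C] at h3
    have : x = c ^ 2 := by linarith
    rw [this, map_pow]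
    exact sq_pos_of_ne_zero ((map_ne_zero φ).2 h1.ne')
  rcases lt_trichotomy x 0 with h | h | h
  · have := key (-x) (by linarith)
    rw [map_neg] at this
    rw [sign_neg h, sign_neg (by linarith)]
  · simp [h]
  · rw [sign_pos h, sign_pos (key x h)]

lemma ivp_alg_closed {R R' : Type*} [Field R] [LinearOrder R] [IsStrictOrderedRing R]
    [Field R'] [LinearOrder R'] [IsStrictOrderedRing R'] (hR : IVP R) (hR' : IVP R')
    (φ : R →+* R') (g : R[X]) (hg : g ≠ 0) (z : R') (hz : eval₂ φ z g = 0) : ∃ c, φ c = z := by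
  obtain ⟨Γ, hle, hΓ, hroot⟩ := exists_closed hR' hR (φ.prod (RingHom.id R)).range (by
    rintro _ ⟨x, rfl⟩
    exact ivp_hom_sign hR φ x)
  have hmem : ∀ x, (φ.prod (RingHom.id R)) x ∈ Γ := fun x => hle ⟨x, rfl⟩
  let θ : R →+* Γ := (φ.prod (RingHom.id R)).codRestrict Γ hmem
  have hθ : (prL Γ).comp θ = φ := by ext x; rfl
  obtain ⟨w, hw⟩ := hroot (g.map θ) ((Polynomial.map_ne_zero_iff θ.injective).2 hg) z (by
    rw [eval₂_map, hθ]; exact hz)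
  refine ⟨w, ?_⟩
  have h1 : (⟨(z, w), hw⟩ : Γ) = θ w := hΓ.injR rfl
  have h2 := congrArg (prL Γ) h1
  exact h2.symm

lemma cut_sign' {R R' : Type*} [Field R] [LinearOrder R] [IsStrictOrderedRing R]
    [Field R'] [LinearOrder R'] [IsStrictOrderedRing R'] (hR : IVP R) (hR' : IVP R')
    (φ : R →+* R') (z : R') (t : R) : ∀ (n : ℕ) (g : R[X]), g.natDegree ≤ n →
      (∀ r, g.eval r = 0 → g ≠ 0 → SignType.sign (z - φ r) = SignType.sign (t - r)) →
      SignType.sign (eval₂ φ z g) = SignType.sign (g.eval t) := by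
  intro n
  induction n with
  | zero =>
    intro g hg _
    rw [eq_C_of_natDegree_le_zero hg]
    simp [ivp_hom_sign hR]
  | succ n ih =>
    intro g hg hr
    by_cases hroot : ∃ c, g.eval c = 0
    · obtain ⟨c, hc⟩ := hroot
      obtain ⟨r, hgr⟩ := dvd_iff_isRoot.2 hc
      by_cases hr0 : r = 0
      · simp [hgr, hr0]
      have hg0 : g ≠ 0 := by rw [hgr]; exact mul_ne_zero (X_sub_C_ne_zero c) hr0
      have hdeg : r.natDegree ≤ n := by
        rw [hgr, natDegree_mul (X_sub_C_ne_zero c) hr0, natDegree_X_sub_C] at hg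
        omega
      have hc' := hr c hc hg0
      have hi := ih r hdeg (fun e he _ => hr e (by rw [hgr]; simp [he]) hg0)
      rw [hgr, eval₂_mul, eval_mul, sign_mul, sign_mul, hi]
      simp [hc']
    · push Not at hroot
      have hg0 : g ≠ 0 := by rintro rfl; exact hroot 0 (by simp)
      have h1 : ∀ c, (g.map φ).eval c ≠ 0 := by
        intro c hc
        rw [← eval₂_eq_eval_map] at hc
        obtain ⟨e, rfl⟩ := ivp_alg_closed hR hR' φ g hg0 c hc
        rw [eval₂_hom] at hc
        exact hroot e ((map_eq_zero φ).1 hc)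
      rw [eval₂_eq_eval_map, ivp_const_sign hR' _ h1 z (φ t), ← eval₂_eq_eval_map, eval₂_hom,
        ivp_hom_sign hR]

lemma exists_specialize {R R' : Type*} [Field R] [LinearOrder R] [IsStrictOrderedRing R]
    [Field R'] [LinearOrder R'] [IsStrictOrderedRing R'] (hR : IVP R) (hR' : IVP R')
    (φ : R →+* R') (z : R') (G : Finset R[X]) :
    ∃ t : R, ∀ g ∈ G, SignType.sign (eval₂ φ z g) = SignType.sign (g.eval t) := by
  classical
  by_cases hz : ∃ t, φ t = z
  · obtain ⟨t, rfl⟩ := hz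
    exact ⟨t, fun g _ => by rw [eval₂_hom, ivp_hom_sign hR]⟩
  push Not at hz
  let A : Finset R := G.biUnion fun g => g.roots.toFinset
  obtain ⟨t, ht1, ht2⟩ := Order.exists_between_finsets (A.filter (fun r => φ r < z))
    (A.filter (fun r => z < φ r)) (by
      intro x hx y hy
      have h := (Finset.mem_filter.1 hx).2.trans (Finset.mem_filter.1 hy).2
      have h2 := ivp_hom_sign hR φ (y - x)
      rw [map_sub, sign_pos (sub_pos.2 h)] at h2
      exact sub_pos.1 (sign_eq_one_iff.1 h2.symm))
  refine ⟨t, fun g hg => cut_sign' hR hR' φ z t _ g le_rfl fun r hr hg0 => ?_⟩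
  have hrA : r ∈ A := by
    simp only [A, Finset.mem_biUnion, Multiset.mem_toFinset]
    exact ⟨g, hg, (mem_roots hg0).2 hr⟩
  rcases lt_or_gt_of_ne (hz r) with h | h
  · rw [sign_pos (sub_pos.2 h), sign_pos (sub_pos.2 (ht1 r (Finset.mem_filter.2 ⟨hrA, h⟩)))]
  · rw [sign_neg (sub_neg.2 h), sign_neg (sub_neg.2 (ht2 r (Finset.mem_filter.2 ⟨hrA, h⟩)))]

lemma exists_specialize_ultra {R R' : Type*} [Field R] [LinearOrder R] [IsStrictOrderedRing R]
    [Field R'] [LinearOrder R'] [IsStrictOrderedRing R'] (hR : IVP R) (hR' : IVP R')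
    (φ : R →+* R') (z : R') :
    ∃ U : Ultrafilter R, ∀ g : R[X],
      ∀ᶠ t in (U : Filter R), SignType.sign (g.eval t) = SignType.sign (eval₂ φ z g) := by
  classical
  let S : R[X] → Set R := fun g => {t | SignType.sign (g.eval t) = SignType.sign (eval₂ φ z g)}
  obtain ⟨U, hU⟩ := Ultrafilter.exists_ultrafilter_of_finite_inter_nonempty (Set.range S) (by
    intro T hT
    obtain ⟨G, hG⟩ : ∃ G : Finset R[X], G.image S = T := by
      obtain ⟨G, -, hG⟩ := Finset.subset_set_image_iff.1
        (show (T : Set (Set R)) ⊆ S '' Set.univ by rw [Set.image_univ]; exact hT)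
      exact ⟨G, hG⟩
    obtain ⟨t, ht⟩ := exists_specialize hR hR' φ z G
    refine ⟨t, ?_⟩
    rw [← hG]
    simp only [Finset.coe_image, Set.sInter_image, Set.mem_iInter]
    intro g hg
    exact (ht g hg).symm)
  exact ⟨U, fun g => hU ⟨g, rfl⟩⟩

open Filter

lemma germ_sign {I R : Type*} [Field R] [LinearOrder R] [IsStrictOrderedRing R]
    (U : Ultrafilter I) (f : I → R) (s : SignType)
    (h : ∀ᶠ t in (U : Filter I), SignType.sign (f t) = s) :
    SignType.sign (f : Germ (U : Filter I) R) = s := by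
  cases s with
  | zero =>
    rw [SignType.zero_eq_zero, sign_eq_zero_iff]
    apply Germ.coe_eq.2
    filter_upwards [h] with t ht
    exact sign_eq_zero_iff.1 ht
  | neg =>
    rw [SignType.neg_eq_neg_one, sign_eq_neg_one_iff]
    apply Germ.coe_lt.2
    filter_upwards [h] with t ht
    exact sign_eq_neg_one_iff.1 ht
  | pos =>
    rw [SignType.pos_eq_one, sign_eq_one_iff]
    apply Germ.coe_pos.2
    filter_upwards [h] with t ht
    exact sign_eq_one_iff.1 ht

lemma germ_ivp {I R : Type*} [Field R] [LinearOrder R] [IsStrictOrderedRing R]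
    (hR : IVP R) (U : Ultrafilter I) : IVP (Germ (U : Filter I) R) := by
  intro p a b hab hp
  induction a using Germ.inductionOn with | _ α
  induction b using Germ.inductionOn with | _ β
  have hsurj : Function.Surjective (Germ.coeRingHom (R := R) (U : Filter I)) := by
    intro x
    induction x using Germ.inductionOn with | _ f
    exact ⟨f, rfl⟩
  obtain ⟨P, rfl⟩ := Polynomial.map_surjective _ hsurj p
  have ev : ∀ α : I → R, (P.map (Germ.coeRingHom (R := R) (U : Filter I))).eval (α : Germ (U : Filter I) R)
      = ((fun t => (P.map (Pi.evalRingHom (fun _ => R) t)).eval (α t) : I → R) :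
        Germ (U : Filter I) R) := by
    intro α
    have h1 : (P.map (Germ.coeRingHom (R := R) (U : Filter I))).eval (α : Germ (U : Filter I) R) =
      Germ.coeRingHom (R := R) (U : Filter I) (P.eval α) := by
      rw [← eval₂_eq_eval_map]; exact eval₂_hom _ _
    rw [h1]
    have h2 : P.eval α = fun t => (P.map (Pi.evalRingHom (fun _ => R) t)).eval (α t) := by
      funext t
      have := eval₂_hom (p := P) (Pi.evalRingHom (fun _ => R) t) α
      rw [← eval₂_eq_eval_map]
      exact this.symm
    rw [h2]
    rfl
  rw [ev, ev, ← Germ.coe_mul] at hp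
  have hp' := Germ.coe_lt.1 hp
  have hab' := Germ.coe_lt.1 hab
  have : ∀ t, ∃ c, (α t < β t → (P.map (Pi.evalRingHom (fun _ => R) t)).eval (α t) *
      (P.map (Pi.evalRingHom (fun _ => R) t)).eval (β t) < 0 →
      α t < c ∧ c < β t ∧ (P.map (Pi.evalRingHom (fun _ => R) t)).eval c = 0) := by
    intro t
    by_cases h1 : α t < β t
    · by_cases h2 : (P.map (Pi.evalRingHom (fun _ => R) t)).eval (α t) *
        (P.map (Pi.evalRingHom (fun _ => R) t)).eval (β t) < 0
      · obtain ⟨c, hc⟩ := hR _ _ _ h1 h2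
        exact ⟨c, fun _ _ => hc⟩
      · exact ⟨0, fun _ h => absurd h h2⟩
    · exact ⟨0, fun h => absurd h h1⟩
  choose γ hγ using this
  refine ⟨(γ : Germ (U : Filter I) R), Germ.coe_lt.2 ?_, Germ.coe_lt.2 ?_, ?_⟩
  · filter_upwards [hp', hab'] with t h1 h2
    exact (hγ t h2 h1).1
  · filter_upwards [hp', hab'] with t h1 h2
    exact (hγ t h2 h1).2.1
  · rw [ev]
    apply Germ.coe_eq.2
    filter_upwards [hp', hab'] with t h1 h2
    exact (hγ t h2 h1).2.2

/-- First projection of a closed sign-compatible correspondence, as a subfield. -/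
def projField {R S : Type*} [Field R] [LinearOrder R] [IsStrictOrderedRing R]
    [Field S] [LinearOrder S] [IsStrictOrderedRing S] (Γ : Subring (R × S))
    (hroot : ∀ g : Γ[X], g ≠ 0 → ∀ z, eval₂ (prL Γ) z g = 0 → ∃ w, (z, w) ∈ Γ) :
    Subfield R :=
  { (prL Γ).range with
    inv_mem' := by
      rintro _ ⟨x, rfl⟩
      by_cases hx : prL Γ x = 0
      · rw [hx, inv_zero]; exact zero_mem (prL Γ).range
      have hx0 : x ≠ 0 := by rintro rfl; simp at hx
      have hne : (C x * X - 1 : Γ[X]) ≠ 0 := by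
        intro h
        have := congrArg (fun p => p.coeff 1) h
        simp [coeff_one] at this
        exact hx0 this
      obtain ⟨w, hw⟩ := hroot (C x * X - 1) hne (prL Γ x)⁻¹ (by
        simp [hx])
      exact ⟨⟨_, hw⟩, rfl⟩ }

lemma mem_projField {R S : Type*} [Field R] [LinearOrder R] [IsStrictOrderedRing R]
    [Field S] [LinearOrder S] [IsStrictOrderedRing S] (Γ : Subring (R × S))
    (hroot : ∀ g : Γ[X], g ≠ 0 → ∀ z, eval₂ (prL Γ) z g = 0 → ∃ w, (z, w) ∈ Γ) (z : R) :
    z ∈ projField Γ hroot ↔ ∃ w, (z, w) ∈ Γ := by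
  constructor
  · rintro ⟨x, rfl⟩
    exact ⟨x.1.2, x.2⟩
  · rintro ⟨w, hw⟩
    exact ⟨⟨_, hw⟩, rfl⟩

lemma projField_ivp {R S : Type*} [Field R] [LinearOrder R] [IsStrictOrderedRing R]
    [Field S] [LinearOrder S] [IsStrictOrderedRing S] (hR : IVP R) (Γ : Subring (R × S))
    (hroot : ∀ g : Γ[X], g ≠ 0 → ∀ z, eval₂ (prL Γ) z g = 0 → ∃ w, (z, w) ∈ Γ) :
    IVP (projField Γ hroot) := by
  intro p a b hab hp
  let M := projField Γ hroot
  have hp0 : p ≠ 0 := by rintro rfl; simp at hp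
  let π : Γ →+* M := (prL Γ).codRestrict M (fun x => ⟨x, rfl⟩)
  have hπ : Function.Surjective π := by
    rintro ⟨_, x, rfl⟩
    exact ⟨x, rfl⟩
  obtain ⟨P, rfl⟩ := Polynomial.map_surjective _ hπ p
  have hP0 : P ≠ 0 := by rintro rfl; simp at hp0
  have hcomp : M.subtype.comp π = prL Γ := by ext x; rfl
  have ev : ∀ c : M, ((P.map (prL Γ)).eval (c : R)) = (((P.map π).eval c : M) : R) := by
    intro c
    rw [← hcomp, ← Polynomial.map_map, ← eval₂_eq_eval_map]
    exact eval₂_hom M.subtype c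
  obtain ⟨c, h1, h2, h3⟩ := hR (P.map (prL Γ)) (a : R) (b : R) hab (by
    rw [ev, ev]; exact hp)
  have hc : c ∈ M := (mem_projField Γ hroot c).2
    (hroot P hP0 c (by rw [eval₂_eq_eval_map]; exact h3))
  refine ⟨⟨c, hc⟩, h1, h2, ?_⟩
  apply Subtype.ext
  rw [← ev]
  exact h3

theorem rcf_transfer (n : ℕ) : ∀ {R R' : Type} [Field R] [LinearOrder R] [IsStrictOrderedRing R]
    [Field R'] [LinearOrder R'] [IsStrictOrderedRing R'] (_ : IVP R) (_ : IVP R')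
    (φ : R →+* R') (g : MvPolynomial (Fin n) R) (y : Fin n → R'),
    MvPolynomial.eval₂ φ y g = 0 → ∃ x : Fin n → R, MvPolynomial.eval x g = 0 := by
  induction n with
  | zero =>
    intro R R' _ _ _ _ _ _ hR hR' φ g y hy
    refine ⟨Fin.elim0, ?_⟩
    apply φ.injective
    rw [map_zero, MvPolynomial.eval₂_comp, ← hy]
    congr 1
    exact Subsingleton.elim _ _
  | succ n ih =>
    intro R R' _ _ _ _ _ _ hR hR' φ g y hy
    obtain ⟨U, hU⟩ := exists_specialize_ultra hR hR' φ (y 0)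
    let S := Germ (U : Filter R) R
    let κ : (R → R) →+* S := Germ.coeRingHom (R := R) (U : Filter R)
    let ι : R →+* S := κ.comp (Pi.constRingHom R R)
    let ystar : S := κ id
    have hS : IVP S := germ_ivp hR U
    let θ : R[X] →+* R' × S := eval₂RingHom (φ.prod ι) (y 0, ystar)
    have hθ : SignCompat θ.range := by
      rintro _ ⟨p, rfl⟩
      have h1 := Polynomial.hom_eval₂ p (φ.prod ι) (RingHom.fst R' S) (y 0, ystar)
      have h2 := Polynomial.hom_eval₂ p (φ.prod ι) (RingHom.snd R' S) (y 0, ystar)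
      simp only [RingHom.coe_fst, RingHom.coe_snd] at h1 h2
      have e1 : (θ p).1 = eval₂ φ (y 0) p := h1
      have e2 : (θ p).2 = eval₂ ι ystar p := h2
      have e3 : eval₂ ι ystar p = κ (fun t => p.eval t) := by
        have h3 := Polynomial.hom_eval₂ p (Pi.constRingHom R R) κ id
        rw [← h3]
        congr 1
        funext t
        have h4 := Polynomial.hom_eval₂ p (Pi.constRingHom R R) (Pi.evalRingHom (fun _ => R) t) id
        exact h4
      rw [e1, e2, e3]
      exact (germ_sign U _ _ (hU p)).symm
    obtain ⟨Γ, hle, hΓ, hroot⟩ := exists_closed hR' hS θ.range hθ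
    let M := projField Γ hroot
    have hM : IVP M := projField_ivp hR' Γ hroot
    have hφΓ : ∀ r, (φ r, ι r) ∈ Γ := fun r => hle ⟨C r, by simp [θ]⟩
    have hyΓ : (y 0, ystar) ∈ Γ := hle ⟨X, by simp [θ]⟩
    let φM : R →+* M := φ.codRestrict M (fun r => (mem_projField Γ hroot _).2 ⟨_, hφΓ r⟩)
    let y0 : M := ⟨y 0, (mem_projField Γ hroot _).2 ⟨_, hyΓ⟩⟩
    let g1 : MvPolynomial (Fin n) M := MvPolynomial.eval₂ (MvPolynomial.C.comp φM)
      (Fin.cons (MvPolynomial.C y0) MvPolynomial.X) g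
    obtain ⟨x, hx⟩ := ih hM hR' M.subtype g1 (fun i => y i.succ) (by
      have := MvPolynomial.map_eval₂Hom (MvPolynomial.C.comp φM)
        (Fin.cons (MvPolynomial.C y0) MvPolynomial.X)
        (MvPolynomial.eval₂Hom M.subtype (fun i => y (Fin.succ i))) g
      have h2 : MvPolynomial.eval₂ M.subtype (fun i => y i.succ) g1 = _ := this
      rw [h2, ← hy]
      show MvPolynomial.eval₂ _ _ g = _
      congr 1
      · ext r; simp [φM]
      · funext i
        refine Fin.cases ?_ (fun i => ?_) i <;> simp [y0])
    have hx' : MvPolynomial.eval₂ φ (Fin.cons (y 0) (fun i => (x i : R'))) g = 0 := by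
      have := MvPolynomial.map_eval₂Hom (MvPolynomial.C.comp φM)
        (Fin.cons (MvPolynomial.C y0) MvPolynomial.X)
        (M.subtype.comp (MvPolynomial.eval x)) g
      have h2 : M.subtype (MvPolynomial.eval x g1) = _ := this
      rw [hx, map_zero] at h2
      rw [h2]
      show _ = MvPolynomial.eval₂ _ _ g
      congr 1
      · ext r; simp [φM]
      · funext i
        refine Fin.cases ?_ (fun i => ?_) i <;> simp [y0]
    have : ∀ i, ∃ w : S, ((x i : R'), w) ∈ Γ := fun i => (mem_projField Γ hroot _).1 (x i).2
    choose w hw using this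
    have hpair : MvPolynomial.eval₂ (φ.prod ι)
        (Fin.cons (y 0, ystar) (fun i => ((x i : R'), w i)) : Fin (n+1) → R' × S) g ∈ Γ := by
      apply MvPolynomial.eval₂_mem
      · intro i _; exact hφΓ _
      · intro i
        refine Fin.cases ?_ (fun i => ?_) i
        · simpa using hyΓ
        · simpa using hw i
    have e1 := MvPolynomial.eval₂_comp_left (RingHom.fst R' S) (φ.prod ι)
      (Fin.cons (y 0, ystar) (fun i => ((x i : R'), w i)) : Fin (n+1) → R' × S) g
    have e2 := MvPolynomial.eval₂_comp_left (RingHom.snd R' S) (φ.prod ι)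
      (Fin.cons (y 0, ystar) (fun i => ((x i : R'), w i)) : Fin (n+1) → R' × S) g
    have c1 : (RingHom.fst R' S) ∘ (Fin.cons (y 0, ystar) (fun i => ((x i : R'), w i)) :
        Fin (n+1) → R' × S) = Fin.cons (y 0) (fun i => (x i : R')) := by
      funext i
      refine Fin.cases ?_ (fun i => ?_) i <;> simp
    have hz := hΓ _ hpair
    rw [c1, RingHom.fst_comp_prod, hx'] at e1
    simp only [RingHom.coe_fst] at e1
    rw [e1, sign_zero, eq_comm, sign_eq_zero_iff] at hz
    simp only [RingHom.coe_snd] at e2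
    rw [hz, RingHom.snd_comp_prod] at e2
    -- now lift to functions
    have hsurj : Function.Surjective κ := by
      intro x
      induction x using Germ.inductionOn with | _ f
      exact ⟨f, rfl⟩
    choose lift hlift using fun i => hsurj (((RingHom.snd R' S) ∘ (Fin.cons (y 0, ystar)
      (fun i => ((x i : R'), w i)) : Fin (n+1) → R' × S)) i)
    have e3 := MvPolynomial.eval₂_comp_left κ (Pi.constRingHom R R) lift g
    have e4 : κ ∘ lift = (RingHom.snd R' S) ∘ (Fin.cons (y 0, ystar)
      (fun i => ((x i : R'), w i)) : Fin (n+1) → R' × S) := funext hlift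
    rw [e4] at e3
    have e5 : κ (MvPolynomial.eval₂ (Pi.constRingHom R R) lift g) = 0 := by
      rw [e3]; exact e2.symm
    have e6 : ∀ᶠ t in (U : Filter R), MvPolynomial.eval₂ (Pi.constRingHom R R) lift g t = 0 :=
      Germ.coe_eq.1 e5
    obtain ⟨t, ht⟩ := e6.exists
    refine ⟨fun i => lift i t, ?_⟩
    have e7 := MvPolynomial.eval₂_comp_left (Pi.evalRingHom (fun _ => R) t)
      (Pi.constRingHom R R) lift g
    have e8 : MvPolynomial.eval₂ (RingHom.id R) (fun i => lift i t) g = 0 := by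
      rw [← ht]; exact e7.symm
    rw [← e8]
    rfl
end transfer


section realclosure

lemma neg_one_sumSq_of {M : Type*} [Field M] {a : M} (ha : a ≠ 0) (h1 : IsSumSq a)
    (h2 : IsSumSq (-a)) : IsSumSq (-1 : M) := by
  have h := (h1.mul h2).mul (IsSumSq.mul_self a⁻¹)
  have e : a * -a * (a⁻¹ * a⁻¹) = -1 := by field_simp
  rwa [e] at h

/-- Sums of squares of polynomials of degree less than `n`. -/
noncomputable def polySOS (M : Type*) [Field M] (n : ℕ) : AddSubmonoid M[X] :=
  AddSubmonoid.closure {x | ∃ g : M[X], g.natDegree < n ∧ x = g * g}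

lemma polySOS_two {M : Type*} [Field M] (G : M[X]) (hG : G ∈ polySOS M 2) :
    ∃ s r t : M, IsSumSq s ∧ IsSumSq t ∧ G = C s + C r * X + C t * X ^ 2 := by
  induction hG using AddSubmonoid.closure_induction with
  | mem x hx =>
    obtain ⟨g, hg, rfl⟩ := hx
    obtain ⟨a, b, rfl⟩ := exists_eq_X_add_C_of_natDegree_le_one (by omega : g.natDegree ≤ 1)
    refine ⟨b * b, 2 * a * b, a * a, IsSumSq.mul_self _, IsSumSq.mul_self _, ?_⟩
    simp only [C_mul, map_ofNat]
    ring
  | zero => exact ⟨0, 0, 0, IsSumSq.zero, IsSumSq.zero, by simp⟩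
  | add x y hx hy ihx ihy =>
    obtain ⟨s, r, t, hs, ht, rfl⟩ := ihx
    obtain ⟨s', r', t', hs', ht', rfl⟩ := ihy
    refine ⟨s + s', r + r', t + t', hs.add hs', ht.add ht', ?_⟩
    simp only [C_add]
    ring

lemma polySOS_eval_nonneg {M : Type*} [Field M] [LinearOrder M] [IsStrictOrderedRing M] (n : ℕ)
    (G : M[X]) (hG : G ∈ polySOS M n) (x : M) : 0 ≤ G.eval x := by
  induction hG using AddSubmonoid.closure_induction with
  | mem y hy =>
    obtain ⟨g, hg, rfl⟩ := hy
    rw [eval_mul]; exact mul_self_nonneg _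
  | zero => simp
  | add y z hy hz ihy ihz => rw [eval_add]; linarith

lemma polySOS_natDegree {M : Type*} [Field M] (n : ℕ) (hn : 1 ≤ n)
    (G : M[X]) (hG : G ∈ polySOS M n) : G.natDegree ≤ 2 * (n - 1) := by
  induction hG using AddSubmonoid.closure_induction with
  | mem y hy =>
    obtain ⟨g, hg, rfl⟩ := hy
    refine natDegree_mul_le.trans ?_
    omega
  | zero => simp
  | add y z hy hz ihy ihz => exact (natDegree_add_le _ _).trans (max_le ihy ihz)

/-- The extension property of maximal real fields. -/
def ExtProp (M : Type*) [Field M] : Prop :=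
  ∀ q : M[X], Irreducible q → 2 ≤ q.natDegree → ∃ G ∈ polySOS M q.natDegree, q ∣ 1 + G

lemma neg_sumSq_of_not_square {M : Type*} [Field M] (hr : ¬ IsSumSq (-1 : M)) (he : ExtProp M)
    (a : M) (ha : ¬ IsSquare a) : IsSumSq (-a) := by
  have hd : (X ^ 2 - C a : M[X]).natDegree = 2 := natDegree_X_pow_sub_C
  have hm : (X ^ 2 - C a : M[X]).Monic := monic_X_pow_sub_C a (by norm_num)
  have hirr : Irreducible (X ^ 2 - C a : M[X]) := by
    rw [hm.irreducible_iff_roots_eq_zero_of_degree_le_three (by omega) (by omega)]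
    rw [Multiset.eq_zero_iff_forall_notMem]
    intro x hx
    rw [mem_roots'] at hx
    have h2 := hx.2
    simp only [IsRoot.def, eval_sub, eval_pow, eval_X, eval_C] at h2
    exact ha ⟨x, by linear_combination -h2⟩
  obtain ⟨G, hG, hdvd⟩ := he _ hirr (by omega)
  rw [hd] at hG
  obtain ⟨s, r, t, hs, ht, rfl⟩ := polySOS_two G hG
  have h1 : (X ^ 2 - C a) ∣ (C r * X + C (1 + s + t * a) : M[X]) := by
    have h := dvd_sub hdvd (Dvd.intro_left (C t) rfl : (X ^ 2 - C a) ∣ C t * (X ^ 2 - C a))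
    have e : 1 + (C s + C r * X + C t * X ^ 2) - C t * (X ^ 2 - C a) =
      (C r * X + C (1 + s + t * a) : M[X]) := by
      simp only [C_add, C_mul, C_1]; ring
    rwa [e] at h
  have h0 : (C r * X + C (1 + s + t * a) : M[X]) = 0 := by
    apply eq_zero_of_dvd_of_natDegree_lt h1
    rw [hd]
    exact lt_of_le_of_lt natDegree_linear_le (by norm_num)
  have h3 : 1 + s + t * a = 0 := by
    have := congrArg (fun p => coeff p 0) h0
    simpa using this
  have ht0 : t ≠ 0 := by
    rintro rfl
    apply hr
    have : (-1 : M) = s := by linear_combination -h3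
    rwa [this]
  have h4 : -a = ((1 + s) * t) * (t⁻¹ * t⁻¹) := by
    field_simp
    linear_combination -h3
  rw [h4]
  exact ((IsSumSq.one.add hs).mul ht).mul (IsSumSq.mul_self _)

lemma sumSq_total {M : Type*} [Field M] (hr : ¬ IsSumSq (-1 : M)) (he : ExtProp M)
    (a : M) : IsSumSq a ∨ IsSumSq (-a) := by
  by_cases h : IsSquare a
  · exact Or.inl h.isSumSq
  · exact Or.inr (neg_sumSq_of_not_square hr he a h)

lemma extProp_ivp {M : Type*} [Field M] [LinearOrder M] [IsStrictOrderedRing M] (he : ExtProp M) :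
    IVP M := by
  have main : ∀ n : ℕ, ∀ p : M[X], p.natDegree ≤ n → ∀ a b, a < b → p.eval a * p.eval b < 0 →
      ∃ c, a < c ∧ c < b ∧ p.eval c = 0 := by
    intro n
    induction n with
    | zero =>
      intro p hp a b hab h
      rw [eq_C_of_natDegree_le_zero hp] at h
      simp only [eval_C] at h
      nlinarith [mul_self_nonneg (p.coeff 0)]
    | succ n ih =>
      intro p hp a b hab h
      have hp0 : p ≠ 0 := by rintro rfl; simp at h
      by_cases hirr : Irreducible p
      · by_cases h1 : p.natDegree ≤ 1
        · obtain ⟨u, v, rfl⟩ := exists_eq_X_add_C_of_natDegree_le_one h1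
          simp only [eval_add, eval_mul, eval_C, eval_X] at h ⊢
          have hu : u ≠ 0 := by
            rintro rfl
            nlinarith [mul_self_nonneg v]
          obtain ⟨w, rfl⟩ : ∃ w, v = - u * w := ⟨-v / u, by field_simp⟩
          have hu2 : 0 < u * u := mul_self_pos.mpr hu
          have h3 : (a - w) * (b - w) < 0 := by
            by_contra hc
            push Not at hc
            nlinarith [mul_nonneg hu2.le hc]
          refine ⟨w, ?_, ?_, by ring⟩
          · by_contra hc; push Not at hc
            nlinarith [mul_nonneg (sub_nonneg.2 hc) (sub_nonneg.2 (hc.trans hab.le))]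
          · by_contra hc; push Not at hc
            nlinarith [mul_nonneg (sub_nonneg.2 hc) (sub_nonneg.2 (hab.le.trans hc))]
        · obtain ⟨G, hG, k, hk⟩ := he p hirr (by omega)
          have hev : ∀ x, 0 < p.eval x * k.eval x := by
            intro x
            have := polySOS_eval_nonneg _ G hG x
            have e := congrArg (eval x) hk
            simp only [eval_add, eval_one, eval_mul] at e
            rw [← e]; linarith
          have hk0 : k ≠ 0 := by
            rintro rfl
            have := hev a
            simp at this
          have hkd : k.natDegree ≤ n := by
            have h3 := congrArg natDegree hk
            rw [natDegree_mul hp0 hk0] at h3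
            have h4 : (1 + G).natDegree ≤ 2 * (p.natDegree - 1) :=
              (natDegree_add_le _ _).trans
                (max_le (by simp) (polySOS_natDegree _ (by omega) G hG))
            omega
          obtain ⟨c, -, -, hc⟩ := ih k hkd a b hab (by
            have h5 := mul_pos (hev a) (hev b)
            by_contra hc
            push Not at hc
            nlinarith [mul_nonneg hc (neg_nonneg.2 h.le)])
          have := hev c
          rw [hc, mul_zero] at this
          exact absurd this (lt_irrefl _)
      · have hnu : ¬ IsUnit p := by
          intro hu
          obtain ⟨c, hc, rfl⟩ := isUnit_iff.1 hu
          simp only [eval_C] at h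
          nlinarith [mul_self_nonneg c]
        rw [irreducible_iff] at hirr
        push Not at hirr
        obtain ⟨q, r, rfl, hq, hr⟩ := hirr hnu
        have hq0 : q ≠ 0 := left_ne_zero_of_mul hp0
        have hr0 : r ≠ 0 := right_ne_zero_of_mul hp0
        have hqd : 0 < q.natDegree := by
          rw [natDegree_pos_iff_degree_pos]
          exact degree_pos_of_ne_zero_of_nonunit hq0 hq
        have hrd : 0 < r.natDegree := by
          rw [natDegree_pos_iff_degree_pos]
          exact degree_pos_of_ne_zero_of_nonunit hr0 hr
        rw [natDegree_mul hq0 hr0] at hp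
        simp only [eval_mul] at h ⊢
        by_cases hs : q.eval a * q.eval b < 0
        · obtain ⟨c, h1, h2, h3⟩ := ih q (by omega) a b hab hs
          exact ⟨c, h1, h2, by rw [h3, zero_mul]⟩
        · obtain ⟨c, h1, h2, h3⟩ := ih r (by omega) a b hab (by
            push Not at hs
            by_contra hc
            push Not at hc
            nlinarith [mul_nonneg hs hc])
          exact ⟨c, h1, h2, by rw [h3, mul_zero]⟩
  intro p a b hab h
  exact main _ p le_rfl a b hab h

/-- The cone of sums of squares. -/
def sosCone (M : Type*) [Field M] (hr : ¬ IsSumSq (-1 : M)) : RingCone M where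
  __ := Subsemiring.sumSq M
  eq_zero_of_mem_of_neg_mem' {a} h1 h2 := by
    by_contra h
    exact hr (neg_one_sumSq_of h (Subsemiring.mem_sumSq.1 h1) (Subsemiring.mem_sumSq.1 h2))

lemma exists_order {M : Type*} [Field M] (hr : ¬ IsSumSq (-1 : M)) (he : ExtProp M) :
    ∃ (_ : LinearOrder M) (_ : IsStrictOrderedRing M), IVP M := by
  classical
  have : HasMemOrNegMem (sosCone M hr) := ⟨fun a => by
    rcases sumSq_total hr he a with h | h
    · exact Or.inl (Subsemiring.mem_sumSq.2 h)
    · exact Or.inr (Subsemiring.mem_sumSq.2 h)⟩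
  letI : LinearOrder M := LinearOrder.mkOfAddGroupCone (sosCone M hr)
  have : IsOrderedRing M := IsOrderedRing.mkOfCone (sosCone M hr)
  have : IsStrictOrderedRing M := IsOrderedRing.toIsStrictOrderedRing M
  exact ⟨_, this, extProp_ivp he⟩

/-- Sums of squares from a subfield. -/
def subSOS {F : Type*} [Field F] (S : Subfield F) : AddSubmonoid F :=
  AddSubmonoid.closure {x | ∃ a ∈ S, x = a * a}

lemma subSOS_of_isSumSq {F : Type*} [Field F] (S : Subfield F) (x : S) (hx : IsSumSq x) :
    (x : F) ∈ subSOS S := by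
  induction hx with
  | zero => exact zero_mem _
  | sq_add a hs ih =>
    rw [Subfield.coe_add, Subfield.coe_mul]
    exact add_mem (AddSubmonoid.subset_closure ⟨a, a.2, rfl⟩) ih

lemma subSOS_fieldRange {K F : Type*} [Field K] [Field F] (f : K →+* F) (x : F)
    (hx : x ∈ subSOS f.fieldRange) : ∃ y : K, IsSumSq y ∧ f y = x := by
  induction hx using AddSubmonoid.closure_induction with
  | mem x hx =>
    obtain ⟨a, ha, rfl⟩ := hx
    obtain ⟨b, rfl⟩ := RingHom.mem_fieldRange.1 ha
    exact ⟨b * b, IsSumSq.mul_self _, map_mul _ _ _⟩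
  | zero => exact ⟨0, IsSumSq.zero, map_zero _⟩
  | add x y hx hy ihx ihy =>
    obtain ⟨u, hu, rfl⟩ := ihx
    obtain ⟨v, hv, rfl⟩ := ihy
    exact ⟨u + v, hu.add hv, map_add _ _ _⟩

lemma subSOS_mono {F : Type*} [Field F] {S T : Subfield F} (h : S ≤ T) : subSOS S ≤ subSOS T :=
  AddSubmonoid.closure_mono (fun _ ⟨a, ha, e⟩ => ⟨a, h ha, e⟩)

lemma exists_max_real {F : Type*} [Field F] (S₀ : Subfield F) (h₀ : (-1 : F) ∉ subSOS S₀) :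
    ∃ M : Subfield F, S₀ ≤ M ∧ (-1 : F) ∉ subSOS M ∧
      ∀ N : Subfield F, M ≤ N → (-1 : F) ∉ subSOS N → N ≤ M := by
  obtain ⟨M, hM, hmax⟩ := zorn_le_nonempty₀ {S : Subfield F | (-1 : F) ∉ subSOS S} (by
    intro c hc hchain y hy
    refine ⟨sSup c, ?_, fun z hz => le_sSup hz⟩
    intro hneg
    have key : ∀ x ∈ subSOS (sSup c), ∃ S ∈ c, x ∈ subSOS S := by
      intro x hx
      induction hx using AddSubmonoid.closure_induction with
      | mem x hx =>
        obtain ⟨a, ha, rfl⟩ := hx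
        obtain ⟨S, hS, haS⟩ := (Subfield.mem_sSup_of_directedOn ⟨y, hy⟩ hchain.directedOn).1 ha
        exact ⟨S, hS, AddSubmonoid.subset_closure ⟨a, haS, rfl⟩⟩
      | zero => exact ⟨y, hy, zero_mem _⟩
      | add u v hu hv ihu ihv =>
        obtain ⟨S, hS, huS⟩ := ihu
        obtain ⟨T, hT, hvT⟩ := ihv
        rcases hchain.total hS hT with h | h
        · exact ⟨T, hT, add_mem (subSOS_mono h huS) hvT⟩
        · exact ⟨S, hS, add_mem huS (subSOS_mono h hvT)⟩
    obtain ⟨S, hS, h⟩ := key _ hneg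
    exact hc hS h) S₀ h₀
  exact ⟨M, hM, hmax.prop, fun N hN hN' => hmax.le_of_ge hN' hN⟩

lemma max_real_ext {F : Type*} [Field F] [IsAlgClosed F] (M : Subfield F)
    (hmax : ∀ N : Subfield F, M ≤ N → (-1 : F) ∉ subSOS N → N ≤ M) : ExtProp M := by
  intro q hirr hd
  obtain ⟨θ, hθ⟩ := IsAlgClosed.exists_aeval_eq_zero F q
    (fun h => by have := natDegree_eq_of_degree_eq_some (n := 0) h; omega)
  have hq0 : q ≠ 0 := hirr.ne_zero
  have hint : IsAlgebraic M θ := ⟨q, hq0, hθ⟩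
  set N := IntermediateField.adjoin M {θ} with hN
  have hMN : M ≤ N.toSubfield := fun x hx => N.algebraMap_mem ⟨x, hx⟩
  have hneg : (-1 : F) ∈ subSOS N.toSubfield := by
    by_contra hc
    have h1 := hmax _ hMN hc (IntermediateField.mem_adjoin_simple_self M θ : θ ∈ N)
    have h2 : q.IsRoot (⟨θ, h1⟩ : M) := by
      have : algebraMap M F (q.eval ⟨θ, h1⟩) = 0 := by
        rw [← aeval_algebraMap_apply_eq_algebraMap_eval]; exact hθ
      exact (map_eq_zero _).1 this
    have h3 := degree_eq_one_of_irreducible_of_root hirr h2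
    have h4 := natDegree_eq_of_degree_eq_some (n := 1) h3
    omega
  have hmem : ∀ x ∈ N.toSubfield, ∃ g : M[X], g.natDegree < q.natDegree ∧ aeval θ g = x := by
    intro x hx
    have hx' : x ∈ N.toSubalgebra := hx
    rw [hN, IntermediateField.adjoin_simple_toSubalgebra_of_isAlgebraic hint,
      Algebra.adjoin_singleton_eq_range_aeval] at hx'
    obtain ⟨g, rfl⟩ := hx'
    refine ⟨g % q, natDegree_mod_lt g (by omega), ?_⟩
    conv_rhs => rw [← EuclideanDomain.div_add_mod g q]
    simp [hθ]
  have hG : ∀ x ∈ subSOS N.toSubfield, ∃ G ∈ polySOS M q.natDegree, aeval θ G = x := by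
    intro x hx
    induction hx using AddSubmonoid.closure_induction with
    | mem x hx =>
      obtain ⟨a, ha, rfl⟩ := hx
      obtain ⟨g, hg, rfl⟩ := hmem a ha
      exact ⟨g * g, AddSubmonoid.subset_closure ⟨g, hg, rfl⟩, map_mul _ _ _⟩
    | zero => exact ⟨0, zero_mem _, map_zero _⟩
    | add u v hu hv ihu ihv =>
      obtain ⟨g, hg, rfl⟩ := ihu
      obtain ⟨k, hk, rfl⟩ := ihv
      exact ⟨g + k, add_mem hg hk, map_add _ _ _⟩
  obtain ⟨G, hGm, hGe⟩ := hG _ hneg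
  refine ⟨G, hGm, ?_⟩
  have h1 : minpoly M θ ∣ 1 + G := minpoly.dvd _ _ (by simp [hGe])
  rw [← minpoly.eq_of_irreducible hirr hθ] at h1
  exact dvd_of_mul_right_dvd h1

theorem exists_real_closure (K : Type) [Field K] (hK : ¬ IsSumSq (-1 : K)) :
    ∃ (M : Type) (_ : Field M) (_ : LinearOrder M) (_ : IsStrictOrderedRing M)
      (_ : K →+* M), IVP M := by
  obtain ⟨M, hKM, hr, hmax⟩ := exists_max_real (algebraMap K (AlgebraicClosure K)).fieldRange (by
    intro h
    obtain ⟨y, hy, e⟩ := subSOS_fieldRange _ _ h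
    have : y = -1 := (algebraMap K (AlgebraicClosure K)).injective (by rw [e]; simp)
    exact hK (this ▸ hy))
  have he := max_real_ext M hmax
  have hr' : ¬ IsSumSq (-1 : M) := fun h => hr (by simpa using subSOS_of_isSumSq M _ h)
  obtain ⟨i1, i2, h⟩ := exists_order hr' he
  exact ⟨M, inferInstance, i1, i2,
    (algebraMap K (AlgebraicClosure K)).codRestrict M (fun x => hKM ⟨x, rfl⟩), h⟩

end realclosure


section realnull

lemma real_ivp : IVP ℝ := by
  intro p a b hab h
  have hc : ContinuousOn (fun x => p.eval x) (Set.Icc a b) := p.continuous.continuousOn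
  rcases mul_neg_iff.1 h with ⟨h1, h2⟩ | ⟨h1, h2⟩
  · obtain ⟨c, hc1, hc2⟩ := intermediate_value_Ioo' hab.le hc ⟨h2, h1⟩
    exact ⟨c, hc1.1, hc1.2, hc2⟩
  · obtain ⟨c, hc1, hc2⟩ := intermediate_value_Ioo hab.le hc ⟨h1, h2⟩
    exact ⟨c, hc1.1, hc1.2, hc2⟩

/-- Real ideal of a commutative ring: sums `a² + s` with `s` a sum of squares. -/
def RealIdeal {A : Type*} [CommRing A] (J : Ideal A) : Prop :=
  ∀ a s : A, IsSumSq s → a * a + s ∈ J → a ∈ J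

lemma RealIdeal.colon {A : Type*} [CommRing A] {P : Ideal A} (hP : RealIdeal P) (a : A) :
    ∃ Q : Ideal A, RealIdeal Q ∧ ∀ x, x ∈ Q ↔ a * x ∈ P := by
  refine ⟨Submodule.comap (LinearMap.mulLeft A a) P, ?_, fun x => Iff.rfl⟩
  intro b s hs h
  have h1 : a * (b * b + s) ∈ P := h
  have h2 := hP (a * b) (a * a * s) ((IsSumSq.mul_self a).mul hs) (by
    have := P.mul_mem_left a h1
    convert this using 1; ring)
  exact h2

lemma exists_real_prime {A : Type*} [CommRing A] (J : Ideal A) (hJ : RealIdeal J) (f : A)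
    (hf : f ∉ J) : ∃ P : Ideal A, J ≤ P ∧ RealIdeal P ∧ P.IsPrime ∧ f ∉ P := by
  obtain ⟨P, hJP, hmax⟩ := zorn_le_nonempty₀ {P : Ideal A | RealIdeal P ∧ f ∉ P} (by
    intro c hc hchain y hy
    have hs : ∀ x, x ∈ sSup c ↔ ∃ I ∈ c, x ∈ I := fun x =>
      Submodule.mem_sSup_of_directed ⟨y, hy⟩ hchain.directedOn
    refine ⟨sSup c, ⟨?_, ?_⟩, fun z hz => le_sSup hz⟩
    · intro a s hss h
      obtain ⟨I, hI, h'⟩ := (hs _).1 h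
      exact (hs _).2 ⟨I, hI, (hc hI).1 a s hss h'⟩
    · intro h
      obtain ⟨I, hI, h'⟩ := (hs _).1 h
      exact (hc hI).2 h') J ⟨hJ, hf⟩
  obtain ⟨hPr, hfP⟩ := hmax.prop
  refine ⟨P, hJP, hPr, ?_, hfP⟩
  have key : ∀ a x, a * x ∈ P → x ∉ P → a * f ∈ P := by
    intro a x hax hx
    obtain ⟨Q, hQ, hm⟩ := hPr.colon a
    by_contra hc
    have hle : P ≤ Q := fun z hz => (hm z).2 (P.mul_mem_left a hz)
    have hQP := hmax.le_of_ge (y := Q) ⟨hQ, fun h => hc ((hm f).1 h)⟩ hle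
    exact hx (hQP ((hm x).2 hax))
  refine ⟨fun h => hfP (h ▸ trivial), ?_⟩
  intro a b hab
  by_contra hc
  push Not at hc
  have h1 := key a b hab hc.2
  have h2 := key f a (by rwa [mul_comm]) hc.1
  exact hfP (hPr f 0 IsSumSq.zero (by simpa using h2))

lemma fraction_real {A : Type*} [CommRing A] (P : Ideal A) [P.IsPrime] (hP : RealIdeal P) :
    ¬ IsSumSq (-1 : FractionRing (A ⧸ P)) := by
  let ψ : A →+* FractionRing (A ⧸ P) :=
    (algebraMap (A ⧸ P) (FractionRing (A ⧸ P))).comp (Ideal.Quotient.mk P)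
  have hψ : ∀ a, ψ a = 0 ↔ a ∈ P := by
    intro a
    simp only [ψ, RingHom.comp_apply]
    rw [IsFractionRing.to_map_eq_zero_iff, Ideal.Quotient.eq_zero_iff_mem]
  have key : ∀ x : FractionRing (A ⧸ P), IsSumSq x →
      ∃ b s : A, b ∉ P ∧ IsSumSq s ∧ ψ b * ψ b * x = ψ s := by
    intro x hx
    induction hx with
    | zero => exact ⟨1, 0, fun h => (inferInstance : P.IsPrime).ne_top ((P.eq_top_iff_one).2 h),
        IsSumSq.zero, by simp⟩
    | sq_add a hs ih =>
      obtain ⟨b, s, hb, hs, e⟩ := ih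
      obtain ⟨n, d, hd, rfl⟩ := IsFractionRing.div_surjective (A := A ⧸ P) a
      obtain ⟨n, rfl⟩ := Ideal.Quotient.mk_surjective n
      obtain ⟨d, rfl⟩ := Ideal.Quotient.mk_surjective d
      have hdP : d ∉ P := by
        intro h
        have := nonZeroDivisors.ne_zero hd
        exact this (Ideal.Quotient.eq_zero_iff_mem.2 h)
      change ∃ b' s' : A, b' ∉ P ∧ IsSumSq s' ∧
        ψ b' * ψ b' * ((ψ n / ψ d) * (ψ n / ψ d) + _) = ψ s'
      refine ⟨b * d, (b * n) * (b * n) + (d * d) * s, ?_, ?_, ?_⟩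
      · intro h
        rcases (inferInstance : P.IsPrime).mem_or_mem h with h | h
        · exact hb h
        · exact hdP h
      · exact (IsSumSq.mul_self _).add ((IsSumSq.mul_self _).mul hs)
      · have hd0 : ψ d ≠ 0 := fun h => hdP ((hψ d).1 h)
        simp only [map_add, map_mul]
        rw [← e]
        field_simp
  intro h
  obtain ⟨b, s, hb, hs, e⟩ := key _ h
  apply hb
  apply hP b s hs
  rw [← hψ, map_add, map_mul, ← e]
  ring

/-- Real Nullstellensatz over `ℝ`. -/
theorem real_nullstellensatz (n : ℕ) (J : Ideal (MvPolynomial (Fin n) ℝ)) (hJ : RealIdeal J)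
    (g f : MvPolynomial (Fin n) ℝ) (hg : g ∈ J)
    (h : ∀ x : Fin n → ℝ, MvPolynomial.eval x g = 0 → MvPolynomial.eval x f = 0) : f ∈ J := by
  by_contra hf
  obtain ⟨P, hJP, hPr, hPp, hfP⟩ := exists_real_prime J hJ f hf
  obtain ⟨M, _, _, _, φ, hM⟩ := exists_real_closure _ (fraction_real P hPr)
  let ψ : MvPolynomial (Fin n) ℝ →+* M :=
    φ.comp ((algebraMap _ (FractionRing (MvPolynomial (Fin n) ℝ ⧸ P))).comp (Ideal.Quotient.mk P))
  have hψ : ∀ a, ψ a = 0 ↔ a ∈ P := by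
    intro a
    simp only [ψ, RingHom.comp_apply]
    rw [map_eq_zero, IsFractionRing.to_map_eq_zero_iff, Ideal.Quotient.eq_zero_iff_mem]
  have hψe : ∀ a, MvPolynomial.eval₂ (ψ.comp MvPolynomial.C) (fun i => ψ (MvPolynomial.X i)) a
      = ψ a := by
    intro a
    have : MvPolynomial.eval₂Hom (ψ.comp MvPolynomial.C) (fun i => ψ (MvPolynomial.X i)) = ψ := by
      ext i <;> simp
    exact congrArg (fun F => F a) this
  have hfM : ψ f ≠ 0 := fun hh => hfP ((hψ f).1 hh)
  have hgM : ψ g = 0 := (hψ g).2 (hJP hg)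
  let ι : MvPolynomial (Fin n) ℝ → MvPolynomial (Fin (n + 1)) ℝ := MvPolynomial.rename Fin.castSucc
  let T : MvPolynomial (Fin (n + 1)) ℝ := MvPolynomial.X (Fin.last n)
  obtain ⟨x, hx⟩ := rcf_transfer (n + 1) real_ivp hM (ψ.comp MvPolynomial.C)
    ((ι g) ^ 2 + (ι f * T - 1) ^ 2)
    (Fin.snoc (α := fun _ => M) (fun i => ψ (MvPolynomial.X i)) (ψ f)⁻¹) (by
      have hcomp : (Fin.snoc (α := fun _ => M) (fun i => ψ (MvPolynomial.X i)) (ψ f)⁻¹ :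
          Fin (n + 1) → M) ∘ Fin.castSucc = (fun i => ψ (MvPolynomial.X i)) := by
        funext i; simp
      simp only [ι, T, MvPolynomial.eval₂_add, MvPolynomial.eval₂_pow, MvPolynomial.eval₂_sub,
        MvPolynomial.eval₂_mul, MvPolynomial.eval₂_one, MvPolynomial.eval₂_X,
        MvPolynomial.eval₂_rename, hcomp, hψe, hgM, Fin.snoc_last]
      rw [mul_inv_cancel₀ hfM]; ring)
  simp only [ι, T, map_add, map_pow, map_sub, map_mul, map_one, MvPolynomial.eval_X,
    MvPolynomial.eval_rename] at hx
  have h1 : MvPolynomial.eval (x ∘ Fin.castSucc) g = 0 := by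
    nlinarith [sq_nonneg (MvPolynomial.eval (x ∘ Fin.castSucc) g),
      sq_nonneg (MvPolynomial.eval (x ∘ Fin.castSucc) f * x (Fin.last n) - 1)]
  rw [h1, h _ h1] at hx
  norm_num at hx

end realnull


section quatfinal

lemma HPoly_const {d : ℕ} (c : ℍ) : (fun _ : Fin d → ℍ => c) ∈ HPoly d :=
  Subring.subset_closure (Or.inl ⟨c, rfl⟩)

lemma HPoly_coord {d : ℕ} (i : Fin d) : (fun a : Fin d → ℍ => a i) ∈ HPoly d :=
  Subring.subset_closure (Or.inr ⟨i, rfl⟩)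

lemma HPoly_re {d : ℕ} {f : (Fin d → ℍ) → ℍ} (hf : f ∈ HPoly d) :
    (fun a => (((f a).re : ℝ) : ℍ)) ∈ HPoly d := by
  have h : (fun a => (((f a).re : ℝ) : ℍ)) = (fun _ => (((1 / 2 : ℝ)) : ℍ)) * (f + star f) := by
    funext a
    simp only [Pi.mul_apply, Pi.add_apply, Pi.star_apply, Quaternion.self_add_star']
    rw [← Quaternion.coe_mul]
    congr 1
    ring
  rw [h]
  exact mul_mem (HPoly_const _) (add_mem hf (star_mem_HPoly hf))

lemma qI_re : qI.re = 0 := rfl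
lemma qI_imI : qI.imI = 1 := rfl
lemma qI_imJ : qI.imJ = 0 := rfl
lemma qI_imK : qI.imK = 0 := rfl
lemma qJ_re : qJ.re = 0 := rfl
lemma qJ_imI : qJ.imI = 0 := rfl
lemma qJ_imJ : qJ.imJ = 1 := rfl
lemma qJ_imK : qJ.imK = 0 := rfl
lemma qK_re : qK.re = 0 := rfl
lemma qK_imI : qK.imI = 0 := rfl
lemma qK_imJ : qK.imJ = 0 := rfl
lemma qK_imK : qK.imK = 1 := rfl

/-- The four real components of a quaternion. -/
noncomputable def qcomp (q : ℍ) : Fin 4 → ℝ := ![q.re, q.imI, q.imJ, q.imK]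

lemma HPoly_comp {d : ℕ} (i : Fin d) (k : Fin 4) :
    (fun a : Fin d → ℍ => ((qcomp (a i) k : ℝ) : ℍ)) ∈ HPoly d := by
  have hmul : ∀ c : ℍ, (fun a : Fin d → ℍ => (((c * a i).re : ℝ) : ℍ)) ∈ HPoly d := fun c =>
    HPoly_re (mul_mem (HPoly_const c) (HPoly_coord i))
  fin_cases k
  · convert hmul 1 using 4 <;> simp [qcomp]
  · convert hmul (-qI) using 4 <;> simp [qcomp, qI_re, qI_imI, qI_imJ, qI_imK, Quaternion.re_mul]
  · convert hmul (-qJ) using 4 <;> simp [qcomp, qJ_re, qJ_imI, qJ_imJ, qJ_imK, Quaternion.re_mul]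
  · convert hmul (-qK) using 4 <;> simp [qcomp, qK_re, qK_imI, qK_imJ, qK_imK, Quaternion.re_mul]

/-- Real coordinates of a point of `ℍ^d`. -/
noncomputable def crd {d : ℕ} (a : Fin d → ℍ) : Fin (d * 4) → ℝ := fun j =>
  qcomp (a (finProdFinEquiv.symm j).1) (finProdFinEquiv.symm j).2

lemma crd_surj {d : ℕ} (x : Fin (d * 4) → ℝ) : ∃ a : Fin d → ℍ, crd a = x := by
  refine ⟨fun i => ⟨x (finProdFinEquiv (i, 0)), x (finProdFinEquiv (i, 1)),
    x (finProdFinEquiv (i, 2)), x (finProdFinEquiv (i, 3))⟩, ?_⟩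
  funext j
  obtain ⟨⟨i, k⟩, rfl⟩ := finProdFinEquiv.surjective j
  unfold crd
  rw [Equiv.symm_apply_apply]
  fin_cases k <;> rfl

lemma realPoly_mem {d : ℕ} (P : MvPolynomial (Fin (d * 4)) ℝ) :
    (fun a : Fin d → ℍ => ((MvPolynomial.eval (crd a) P : ℝ) : ℍ)) ∈ HPoly d := by
  induction P using MvPolynomial.induction_on with
  | C c => simpa using HPoly_const (c : ℍ)
  | add p q hp hq =>
    convert add_mem hp hq using 1
    funext a; simp
  | mul_X p j hp =>
    convert mul_mem hp (HPoly_comp (finProdFinEquiv.symm j).1 (finProdFinEquiv.symm j).2) using 1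
    funext a; simp [crd]

/-- Real polynomials as real valued elements of `HPoly d`. -/
noncomputable def toH (d : ℕ) : MvPolynomial (Fin (d * 4)) ℝ →+* HPoly d where
  toFun P := ⟨_, realPoly_mem P⟩
  map_one' := Subtype.ext (by funext a; simp)
  map_zero' := Subtype.ext (by funext a; simp)
  map_add' p q := Subtype.ext (by funext a; simp)
  map_mul' p q := Subtype.ext (by funext a; simp)

lemma toH_apply {d : ℕ} (P : MvPolynomial (Fin (d * 4)) ℝ) (a : Fin d → ℍ) :
    (toH d P : (Fin d → ℍ) → ℍ) a = ((MvPolynomial.eval (crd a) P : ℝ) : ℍ) := rfl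

lemma star_toH {d : ℕ} (P : MvPolynomial (Fin (d * 4)) ℝ) : star (toH d P) = toH d P :=
  Subtype.ext (by
    funext a
    change star ((MvPolynomial.eval (crd a) P : ℝ) : ℍ) = _
    rw [Quaternion.star_coe]; rfl)

lemma HPoly_components {d : ℕ} {f : (Fin d → ℍ) → ℍ} (hf : f ∈ HPoly d) :
    ∃ P : Fin 4 → MvPolynomial (Fin (d * 4)) ℝ, ∀ a,
      (f a).re = MvPolynomial.eval (crd a) (P 0) ∧ (f a).imI = MvPolynomial.eval (crd a) (P 1) ∧
      (f a).imJ = MvPolynomial.eval (crd a) (P 2) ∧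
      (f a).imK = MvPolynomial.eval (crd a) (P 3) := by
  induction hf using Subring.closure_induction with
  | mem g hg =>
    rcases hg with ⟨c, rfl⟩ | ⟨i, rfl⟩
    · exact ⟨fun k => MvPolynomial.C (qcomp c k), fun a => by simp [qcomp]⟩
    · exact ⟨fun k => MvPolynomial.X (finProdFinEquiv (i, k)), fun a => by simp [crd, qcomp]⟩
  | one => exact ⟨![1, 0, 0, 0], fun a => by simp; exact ⟨rfl, rfl, rfl, rfl⟩⟩
  | zero => exact ⟨![0, 0, 0, 0], fun a => by simp; exact ⟨rfl, rfl, rfl, rfl⟩⟩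
  | mul x y hx hy ihx ihy =>
    obtain ⟨P, hP⟩ := ihx
    obtain ⟨Q, hQ⟩ := ihy
    refine ⟨![P 0 * Q 0 - P 1 * Q 1 - P 2 * Q 2 - P 3 * Q 3,
      P 0 * Q 1 + P 1 * Q 0 + P 2 * Q 3 - P 3 * Q 2,
      P 0 * Q 2 - P 1 * Q 3 + P 2 * Q 0 + P 3 * Q 1,
      P 0 * Q 3 + P 1 * Q 2 - P 2 * Q 1 + P 3 * Q 0], fun a => ?_⟩
    obtain ⟨h0, h1, h2, h3⟩ := hP a
    obtain ⟨k0, k1, k2, k3⟩ := hQ a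
    simp [h0, h1, h2, h3, k0, k1, k2, k3, Quaternion.re_mul, Quaternion.imI_mul, Quaternion.imJ_mul, Quaternion.imK_mul]
  | add x y hx hy ihx ihy =>
    obtain ⟨P, hP⟩ := ihx
    obtain ⟨Q, hQ⟩ := ihy
    refine ⟨fun k => P k + Q k, fun a => ?_⟩
    obtain ⟨h0, h1, h2, h3⟩ := hP a
    obtain ⟨k0, k1, k2, k3⟩ := hQ a
    simp [h0, h1, h2, h3, k0, k1, k2, k3]
  | neg x hx ihx =>
    obtain ⟨P, hP⟩ := ihx
    refine ⟨fun k => - P k, fun a => ?_⟩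
    obtain ⟨h0, h1, h2, h3⟩ := hP a
    simp [h0, h1, h2, h3]

/-- The norm square of a quaternionic polynomial is a real polynomial. -/
lemma exists_normSq {d : ℕ} (h : HPoly d) :
    ∃ N : MvPolynomial (Fin (d * 4)) ℝ, toH d N = star h * h ∧
      ∀ a, MvPolynomial.eval (crd a) N = Quaternion.normSq ((h : (Fin d → ℍ) → ℍ) a) := by
  obtain ⟨P, hP⟩ := HPoly_components h.2
  have key : ∀ a, MvPolynomial.eval (crd a) (P 0 ^ 2 + P 1 ^ 2 + P 2 ^ 2 + P 3 ^ 2) =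
      Quaternion.normSq ((h : (Fin d → ℍ) → ℍ) a) := by
    intro a
    obtain ⟨h0, h1, h2, h3⟩ := hP a
    rw [Quaternion.normSq_def', h0, h1, h2, h3]
    simp
  refine ⟨_, Subtype.ext ?_, key⟩
  funext a
  rw [toH_apply, key, ← Quaternion.star_mul_self]
  rfl

lemma isSumSq_fin {A : Type*} [CommRing A] (s : A) (hs : IsSumSq s) :
    ∃ (k : ℕ) (b : Fin k → A), s = ∑ i, b i * b i := by
  induction hs with
  | zero => exact ⟨0, Fin.elim0, by simp⟩
  | sq_add a hs ih =>
    obtain ⟨k, b, rfl⟩ := ih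
    exact ⟨k + 1, Fin.cons a b, by simp [Fin.sum_univ_succ]⟩

lemma real_ideal_restrict {d : ℕ} (I : Ideal (HPoly d)) (hI : I.IsRealLeftIdeal) :
    ∃ J : Ideal (MvPolynomial (Fin (d * 4)) ℝ), RealIdeal J ∧ ∀ P, P ∈ J ↔ toH d P ∈ I := by
  refine ⟨Ideal.comap (toH d) I, ?_, fun P => Iff.rfl⟩
  intro a s hs h
  obtain ⟨k, b, rfl⟩ := isSumSq_fin s hs
  have h1 : toH d (a * a + ∑ i, b i * b i) ∈ I := h
  have := hI (k + 1) (Fin.cons (toH d a) (fun i => toH d (b i))) (by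
    rw [Fin.sum_univ_succ]
    simpa [star_toH] using h1) 0
  exact this

lemma real_left_ideal_point {d : ℕ} (a : Fin d → ℍ) :
    ∃ I : Ideal (HPoly d), I.IsRealLeftIdeal ∧
      ∀ f, f ∈ I ↔ (f : (Fin d → ℍ) → ℍ) a = 0 := by
  let ev : HPoly d →+* ℍ := (Pi.evalRingHom (fun _ : Fin d → ℍ => ℍ) a).comp (HPoly d).subtype
  have hev : ∀ f, ev f = (f : (Fin d → ℍ) → ℍ) a := fun f => rfl
  refine ⟨RingHom.ker ev, ?_, fun f => Iff.rfl⟩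
  intro k b hb i
  rw [RingHom.mem_ker] at hb ⊢
  rw [map_sum] at hb
  have hs : ∀ i, ev (star (b i) * b i) = ((Quaternion.normSq (ev (b i)) : ℝ) : ℍ) := by
    intro i
    rw [← Quaternion.star_mul_self]
    rfl
  simp only [hs] at hb
  have hb' : ∑ i, Quaternion.normSq (ev (b i)) = 0 := by
    have := congrArg QuaternionAlgebra.re hb
    have e : (∑ i, ((Quaternion.normSq (ev (b i)) : ℝ) : ℍ)) =
      ((∑ i, Quaternion.normSq (ev (b i)) : ℝ) : ℍ) := by
      exact (map_sum (algebraMap ℝ ℍ) _ _).symm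
    rw [e] at this
    exact this
  rw [Finset.sum_eq_zero_iff_of_nonneg (fun _ _ => Quaternion.normSq_nonneg)] at hb'
  exact Quaternion.normSq_eq_zero.1 (hb' i (Finset.mem_univ i))

end quatfinal

/-- **Second Quaternionic Nullstellensatz (Theorem C).** -/
theorem quaternionic_nullstellensatz (d m : ℕ) (p : Fin m → HPoly d) (q : HPoly d) :
    (∀ a : Fin d → ℍ, (∀ i, (p i : (Fin d → ℍ) → ℍ) a = 0) → (q : (Fin d → ℍ) → ℍ) a = 0) ↔
      (∀ I : Ideal (HPoly d), I.IsRealLeftIdeal → (∀ i, p i ∈ I) → q ∈ I) := by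
  constructor
  · intro h I hI hp
    obtain ⟨J, hJ, hJI⟩ := real_ideal_restrict I hI
    choose N hN1 hN2 using fun i => exists_normSq (p i)
    obtain ⟨Q, hQ1, hQ2⟩ := exists_normSq q
    have hQJ : Q ∈ J := by
      refine real_nullstellensatz _ J hJ (∑ i, N i) Q ?_ ?_
      · refine Ideal.sum_mem _ (fun i _ => ?_)
        rw [hJI, hN1]
        exact I.mul_mem_left _ (hp i)
      · intro x hx
        obtain ⟨a, rfl⟩ := crd_surj x
        rw [map_sum] at hx
        simp only [hN2] at hx
        rw [Finset.sum_eq_zero_iff_of_nonneg (fun _ _ => Quaternion.normSq_nonneg)] at hx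
        rw [hQ2, h a (fun i => Quaternion.normSq_eq_zero.1 (hx i (Finset.mem_univ i)))]
        simp
    rw [hJI, hQ1] at hQJ
    exact hI 1 (fun _ => q) (by simpa using hQJ) 0
  · intro h a ha
    obtain ⟨I, hI, hm⟩ := real_left_ideal_point a
    exact (hm q).1 (h I hI (fun i => (hm (p i)).2 (ha i)))
end

section
/- (Lemma 1) Let F be a field, D a finite-dimensional division algebra over F whose center is F, and R a commutative F-algebra. Let v₁, …, v_l be an F-basis of D and c₁, …, c_l ∈ R. Then every two-sided ideal of D ⊗_F R that contains the element v₁ ⊗ c₁ + ⋯ + v_l ⊗ c_l also contains the elements 1 ⊗ c₁, …, 1 ⊗ c_l. -/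
open TensorProduct

theorem exists_tensor_delta
    (F : Type*) [Field F] (D : Type*) [DivisionRing D] [Algebra F D]
    [Algebra.IsCentral F D] (f : D →ₗ[F] D) (s : Finset D) :
    ∃ t : D ⊗[F] Dᵐᵒᵖ, ∀ m ∈ s, f m = AlgHom.mulLeftRight F D t m := by
  letI : Module (D ⊗[F] Dᵐᵒᵖ) D :=
    Module.compHom D (AlgHom.mulLeftRight F D).toRingHom
  have hs : ∀ (t : D ⊗[F] Dᵐᵒᵖ) (x : D), t • x = AlgHom.mulLeftRight F D t x :=
    fun _ _ => rfl
  haveI : IsSimpleModule (D ⊗[F] Dᵐᵒᵖ) D := by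
    rw [isSimpleModule_iff_toSpanSingleton_surjective]
    refine ⟨inferInstance, fun m hm x => ⟨(x * m⁻¹) ⊗ₜ 1, ?_⟩⟩
    simp [hs, hm]
  have hg : ∀ g : Module.End (D ⊗[F] Dᵐᵒᵖ) D, ∃ k : F, ∀ x, g x = k • x := by
    intro g
    have h1 : ∀ x, g x = x * g 1 := fun x => by
      have := g.map_smul (x ⊗ₜ 1) 1
      simpa [hs] using this
    have h2 : ∀ x, g x = g 1 * x := fun x => by
      have := g.map_smul (1 ⊗ₜ MulOpposite.op x) 1
      simpa [hs] using this
    have hc : g 1 ∈ Subalgebra.center F D := by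
      rw [Subalgebra.mem_center_iff]
      intro b
      rw [← h1, ← h2]
    rw [Algebra.IsCentral.center_eq_bot] at hc
    obtain ⟨k, hk⟩ := Algebra.mem_bot.1 hc
    exact ⟨k, fun x => by rw [h2, ← hk, Algebra.smul_def]⟩
  let f' : Module.End (Module.End (D ⊗[F] Dᵐᵒᵖ) D) D :=
    { toFun := f
      map_add' := f.map_add
      map_smul' := fun g x => by
        obtain ⟨k, hk⟩ := hg g
        simp [hk] }
  obtain ⟨t, ht⟩ := jacobson_density f' s
  exact ⟨t, fun m hm => ht m hm⟩



/-- **Lemma 1.** Let `D` be a finite-dimensional central division algebra over a field `F`,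
`R` a commutative `F`-algebra, `v 0, …, v (l-1)` an `F`-basis of `D` and
`c 0, …, c (l-1) ∈ R`.  Every two-sided ideal of `D ⊗_F R` (here: a left ideal `I`, in
Mathlib's sense, which is moreover closed under right multiplication) containing
`∑ i, v i ⊗ c i` contains every `1 ⊗ c i`. -/
theorem basis_coeffs_mem_of_sum_mem
    (F : Type*) [Field F] (D : Type*) [DivisionRing D] [Algebra F D]
    [FiniteDimensional F D] [Algebra.IsCentral F D]
    (R : Type*) [CommRing R] [Algebra F R] {l : ℕ}
    (v : Module.Basis (Fin l) F D) (c : Fin l → R)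
    (I : Ideal (D ⊗[F] R)) (hI : ∀ x ∈ I, ∀ y : D ⊗[F] R, x * y ∈ I)
    (h : (∑ i, v i ⊗ₜ[F] c i) ∈ I) :
    ∀ i, ((1 : D) ⊗ₜ[F] c i) ∈ I := by
  classical
  intro i
  obtain ⟨t, ht⟩ := exists_tensor_delta F D
    ((v.coord i).smulRight (1 : D)) (Finset.univ.image v)
  have key : ∀ t : D ⊗[F] Dᵐᵒᵖ, (∑ j, (AlgHom.mulLeftRight F D t (v j)) ⊗ₜ[F] c j) ∈ I := by
    intro t
    induction t with
    | zero => simp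
    | tmul a b =>
      have := hI _ (I.mul_mem_left (a ⊗ₜ[F] (1 : R)) h) (b.unop ⊗ₜ[F] (1 : R))
      simpa [Finset.mul_sum, Finset.sum_mul] using this
    | add x y hx hy =>
      simpa [TensorProduct.add_tmul, Finset.sum_add_distrib] using I.add_mem hx hy
  have hk := key t
  have : ∀ j, AlgHom.mulLeftRight F D t (v j) = if j = i then 1 else 0 := fun j => by
    rw [← ht (v j) (by simp)]
    simp [Finsupp.single_apply]
  simp only [this] at hk
  rw [Finset.sum_eq_single i (by intro j _ hj; simp [hj]) (by simp)] at hk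
  simpa using hk
end
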